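/- Let n = 2m be a positive even integer, H a complex Hilbert space with grading operator ε, F bounded with F² = 1 and Fε = −εF, A a ℂ-algebra, and ρ : A → B(H) a homomorphism into even operators with Fρ(a) − ρ(a)F (n+1)-Schatten for all a ∈ A. Define τⁿ(a₀,…,aₙ) = (2iπ)^m m! Tr_s(ρ(a₀)dρ(a₁)⋯dρ(aₙ)), τ^{n+2}(a₀,…,a_{n+2}) = (2iπ)^{m+1}(m+1)! Tr_s(ρ(a₀)dρ(a₁)⋯dρ(a_{n+2})), and (Sτⁿ)(a₀,…,a_{n+2}) = (2iπ)^{m+1} m! Σ_{j=0}^{n+1} Tr_s(ρ(a₀)dρ(a₁)⋯dρ(a_{j−1})·ρ(a_j)ρ(a_{j+1})·dρ(a_{j+2})⋯dρ(a_{n+2})). For 0 ≤ j ≤ n+1 let φ_j(a₀,…,a_{n+1}) = Trace(εF·ρ(a_j)dρ(a_{j+1})⋯dρ(a_{n+1})dρ(a₀)dρ(a₁)⋯dρ(a_{j−1})) and φ = Σ_{j=0}^{n+1} (−1)^j φ_j. Then φ ∈ C^{n+1}_λ(A) and Sτⁿ − τ^{n+2} = b(2^m i^{m+2} π^{m+1}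 m!·φ); in particular Sτⁿ and τ^{n+2} define the same class in H^{n+2}_λ(A). -/

import Mathlib

open scoped ENNReal

noncomputable section

variable {H : Type*} [NormedAddCommGroup H] [InnerProductSpace ℂ H] [CompleteSpace H]
variable {A : Type*} [NonUnitalRing A] [Module ℂ A] [SMulCommClass ℂ A A] [IsScalarTower ℂ A A]

/-- The `n`-th singular value of a (compact) operator `T` (approximation numbers). -/
def sval (T : H →L[ℂ] H) (n : ℕ) : ℝ :=
  sInf {c : ℝ | ∃ R : H →L[ℂ] H,
    Module.rank ℂ (LinearMap.range (R : H →ₗ[ℂ] H)) ≤ (n : Cardinal) ∧ c = ‖T - R‖}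

/-- The `p`-Schatten norm `‖T‖_p = (Σ_n s_n(T)^p)^(1/p)`, valued in `ℝ≥0∞`. -/
def schattenNorm (p : ℝ) (T : H →L[ℂ] H) : ℝ≥0∞ :=
  (∑' n : ℕ, ENNReal.ofReal (sval T n ^ p)) ^ (1 / p)

/-- `T` is a `p`-Schatten operator: compact with finite `p`-Schatten norm. -/
def MemSchatten (p : ℝ) (T : H →L[ℂ] H) : Prop :=
  IsCompactOperator (⇑T) ∧ schattenNorm p T < ⊤

/-- The trace of an operator, computed in a (choice of) Hilbert basis of `H`. -/
def opTrace (T : H →L[ℂ] H) : ℂ :=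
  ∑' i : (exists_hilbertBasis ℂ H).choose,
    @inner ℂ H _ ((exists_hilbertBasis ℂ H).choose_spec.choose i)
      (T ((exists_hilbertBasis ℂ H).choose_spec.choose i))

/-- The even part of `θ` with respect to the grading `ε`. -/
def evenPart (ε θ : H →L[ℂ] H) : H →L[ℂ] H := (2 : ℂ)⁻¹ • (θ + ε * θ * ε)

/-- The odd part of `θ` with respect to the grading `ε`. -/
def oddPart (ε θ : H →L[ℂ] H) : H →L[ℂ] H := (2 : ℂ)⁻¹ • (θ - ε * θ * ε)

/-- The graded commutator `[F, θ]`, extended additively from homogeneous operators. -/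
def gComm (ε F θ : H →L[ℂ] H) : H →L[ℂ] H :=
  (F * evenPart ε θ - evenPart ε θ * F) + (F * oddPart ε θ + oddPart ε θ * F)

/-- The graded trace `Tr_s(θ) := (1/2)·Trace(εF[F,θ])`. -/
def Trs (ε F θ : H →L[ℂ] H) : ℂ := (2 : ℂ)⁻¹ * opTrace (ε * F * gComm ε F θ)

/-- `dT = i(FT - TF)` for an even operator `T`. -/
def dOp (F T : H →L[ℂ] H) : H →L[ℂ] H := Complex.I • (F * T - T * F)

/-- The ordered product `f s * f (s+1) * ⋯ * f (s+k-1)` of operators. -/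
def opList (f : ℕ → H →L[ℂ] H) (s k : ℕ) : H →L[ℂ] H := ((List.range' s k).map f).prod

/-- The operator `ρ(a₀)·dρ(a₁)⋯dρ(a_k)`. -/
def charOp (ρf : A → H →L[ℂ] H) (F : H →L[ℂ] H) (k : ℕ) (a : Fin (k + 1) → A) :
    H →L[ℂ] H :=
  ρf (a 0) *
    opList (fun j => dOp F (ρf (a ⟨j % (k + 1), Nat.mod_lt _ (Nat.succ_pos k)⟩))) 1 k

/-- The `k`-dimensional character `τ(a₀,…,a_k) = (2iπ)^mm · mm! · Tr_s(ρ(a₀)dρ(a₁)⋯dρ(a_k))`. -/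
def tauChar (ρf : A → H →L[ℂ] H) (ε F : H →L[ℂ] H) (mm k : ℕ) (a : Fin (k + 1) → A) : ℂ :=
  (2 * Complex.I * (Real.pi : ℂ)) ^ mm * (Nat.factorial mm : ℂ) * Trs ε F (charOp ρf F k a)

/-- The Hochschild coboundary `b` on `(k+1)`-linear functionals. -/
def hochB {A : Type*} [Mul A] (k : ℕ) (ψ : (Fin (k + 1) → A) → ℂ) :
    (Fin (k + 2) → A) → ℂ := fun a =>
  (∑ i : Fin (k + 1), (-1 : ℂ) ^ (i : ℕ) *
    ψ (fun j => if (j : ℕ) < (i : ℕ) then a j.castSucc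
        else if (j : ℕ) = (i : ℕ) then a j.castSucc * a j.succ
        else a j.succ)) +
  (-1 : ℂ) ^ (k + 1) * ψ (fun j => if (j : ℕ) = 0 then a (Fin.last (k + 1)) * a 0
    else a j.castSucc)

/-- Cyclic indexing of a tuple by natural numbers. -/
def natIdx {A : Type*} {m : ℕ} (a : Fin (m + 1) → A) (k : ℕ) : A :=
  a ⟨k % (m + 1), Nat.mod_lt _ (Nat.succ_pos m)⟩

/-- The functional `Sτⁿ`: `(Sτⁿ)(a₀,…,a_{n+2}) = (2iπ)^{m+1} m! Σ_{j=0}^{n+1}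
Tr_s(ρ(a₀)dρ(a₁)⋯dρ(a_{j-1})·ρ(a_j)ρ(a_{j+1})·dρ(a_{j+2})⋯dρ(a_{n+2}))`. -/
def STau (ρf : A → H →L[ℂ] H) (ε F : H →L[ℂ] H) (mm n : ℕ) (a : Fin (n + 3) → A) : ℂ :=
  (2 * Complex.I * (Real.pi : ℂ)) ^ (mm + 1) * (Nat.factorial mm : ℂ) *
    ∑ j ∈ Finset.range (n + 2),
      Trs ε F
        (opList (fun k => if k = 0 then ρf (natIdx (m := n + 2) a k)
            else dOp F (ρf (natIdx (m := n + 2) a k))) 0 j *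
          ρf (natIdx (m := n + 2) a j) * ρf (natIdx (m := n + 2) a (j + 1)) *
          opList (fun k => dOp F (ρf (natIdx (m := n + 2) a k))) (j + 2) (n + 1 - j))

/-- The cochain `φ = Σ_{j=0}^{n+1} (-1)^j φ_j`, where
`φ_j(a₀,…,a_{n+1}) = Trace(εF·ρ(a_j)dρ(a_{j+1})⋯dρ(a_{n+1})dρ(a₀)⋯dρ(a_{j-1}))`. -/
def phiFn (ρf : A → H →L[ℂ] H) (ε F : H →L[ℂ] H) (n : ℕ) (a : Fin (n + 2) → A) : ℂ :=
  ∑ j ∈ Finset.range (n + 2), (-1 : ℂ) ^ j *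
    opTrace (ε * F * ρf (natIdx (m := n + 1) a j) *
      opList (fun k => dOp F (ρf (natIdx (m := n + 1) a k))) (j + 1) (n + 1))

set_option linter.unusedSectionVars false

/-! ### Approximation numbers -/

def RkLe (R : H →L[ℂ] H) (n : ℕ) : Prop :=
  Module.rank ℂ (LinearMap.range (R : H →ₗ[ℂ] H)) ≤ (n : Cardinal)

lemma RkLe.add {R S : H →L[ℂ] H} {m n : ℕ} (hR : RkLe R m) (hS : RkLe S n) :
    RkLe (R + S) (m + n) := by
  have := LinearMap.rank_add_le (R : H →ₗ[ℂ] H) (S : H →ₗ[ℂ] H)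
  refine le_trans this ?_
  push_cast
  exact add_le_add hR hS

lemma RkLe.mul_left {R : H →L[ℂ] H} {n : ℕ} (hR : RkLe R n) (S : H →L[ℂ] H) :
    RkLe (S * R) n :=
  le_trans (LinearMap.rank_comp_le_right (R : H →ₗ[ℂ] H) (S : H →ₗ[ℂ] H)) hR

lemma RkLe.mul_right {R : H →L[ℂ] H} {n : ℕ} (hR : RkLe R n) (S : H →L[ℂ] H) :
    RkLe (R * S) n :=
  le_trans (LinearMap.rank_comp_le_left (S : H →ₗ[ℂ] H) (R : H →ₗ[ℂ] H)) hR

lemma RkLe.neg {R : H →L[ℂ] H} {n : ℕ} (hR : RkLe R n) : RkLe (-R) n := by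
  have := hR.mul_left (-1)
  simpa using this

lemma RkLe.mono {R : H →L[ℂ] H} {m n : ℕ} (hR : RkLe R m) (h : m ≤ n) : RkLe R n :=
  le_trans hR (by exact_mod_cast h)

lemma RkLe.zero (n : ℕ) : RkLe (0 : H →L[ℂ] H) n := by
  have h : LinearMap.rank (0 : H →ₗ[ℂ] H) = 0 := LinearMap.rank_zero
  unfold RkLe
  have : Module.rank ℂ (LinearMap.range ((0 : H →L[ℂ] H) : H →ₗ[ℂ] H)) = 0 := h
  rw [this]
  exact zero_le

lemma sval_le {T R : H →L[ℂ] H} {n : ℕ} (hR : RkLe R n) : sval T n ≤ ‖T - R‖ := by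
  refine csInf_le ⟨0, ?_⟩ ⟨R, hR, rfl⟩
  rintro c ⟨R, -, rfl⟩
  exact norm_nonneg _

lemma sval_nonneg (T : H →L[ℂ] H) (n : ℕ) : 0 ≤ sval T n := by
  refine Real.sInf_nonneg ?_
  rintro c ⟨R, -, rfl⟩
  exact norm_nonneg _

lemma sval_exists (T : H →L[ℂ] H) (n : ℕ) {δ : ℝ} (hδ : 0 < δ) :
    ∃ R : H →L[ℂ] H, RkLe R n ∧ ‖T - R‖ < sval T n + δ := by
  have hne : {c : ℝ | ∃ R : H →L[ℂ] H,
    Module.rank ℂ (LinearMap.range (R : H →ₗ[ℂ] H)) ≤ (n : Cardinal) ∧ c = ‖T - R‖}.Nonempty :=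
    ⟨_, 0, RkLe.zero n, rfl⟩
  obtain ⟨c, ⟨R, hR, rfl⟩, hc⟩ := Real.lt_sInf_add_pos hne hδ
  exact ⟨R, hR, hc⟩

lemma sval_le_norm (T : H →L[ℂ] H) (n : ℕ) : sval T n ≤ ‖T‖ := by
  simpa using sval_le (T := T) (RkLe.zero n)

lemma sval_antitone (T : H →L[ℂ] H) : Antitone (sval T) := by
  intro m n h
  refine le_of_forall_pos_le_add fun δ hδ => ?_
  obtain ⟨R, hR, h1⟩ := sval_exists T m hδ
  exact (sval_le (hR.mono h)).trans h1.le

lemma sval_add (S T : H →L[ℂ] H) (m n : ℕ) : sval (S + T) (m + n) ≤ sval S m + sval T n := by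
  refine le_of_forall_pos_le_add fun δ hδ => ?_
  obtain ⟨R, hR, h1⟩ := sval_exists S m (half_pos hδ)
  obtain ⟨R', hR', h2⟩ := sval_exists T n (half_pos hδ)
  have h3 := sval_le (T := S + T) (hR.add hR')
  have h4 : S + T - (R + R') = (S - R) + (T - R') := by abel
  rw [h4] at h3
  have := norm_add_le (S - R) (T - R')
  linarith

lemma sval_mul (S T : H →L[ℂ] H) (m n : ℕ) : sval (S * T) (m + n) ≤ sval S m * sval T n := by
  have key : ∀ δ : ℝ, 0 < δ → sval (S * T) (m + n) ≤ (sval S m + δ) * (sval T n + δ) := by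
    intro δ hδ
    obtain ⟨R, hR, h1⟩ := sval_exists S m hδ
    obtain ⟨R', hR', h2⟩ := sval_exists T n hδ
    have h3 := sval_le (T := S * T) ((hR.mul_right T).add (hR'.mul_left (S - R)))
    have h4 : S * T - (R * T + (S - R) * R') = (S - R) * (T - R') := by noncomm_ring
    rw [h4] at h3
    refine h3.trans ((norm_mul_le _ _).trans ?_)
    exact mul_le_mul h1.le h2.le (norm_nonneg _) (by linarith [sval_nonneg S m])
  have hc : Filter.Tendsto (fun δ : ℝ => (sval S m + δ) * (sval T n + δ))
      (nhdsWithin 0 (Set.Ioi 0)) (nhds ((sval S m + 0) * (sval T n + 0))) := by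
    refine Filter.Tendsto.mono_left ?_ nhdsWithin_le_nhds
    exact Continuous.tendsto (by fun_prop) 0
  simp only [add_zero] at hc
  refine ge_of_tendsto hc ?_
  filter_upwards [self_mem_nhdsWithin] with δ hδ using key δ hδ

/-! ### Finite rank operators and the diagonal -/

lemma rk_decomp {R : H →L[ℂ] H} {n : ℕ} (hR : RkLe R n) :
    ∃ (r : ℕ) (f g : Fin r → H), r ≤ n ∧ (∀ j, ‖f j‖ ≤ 1) ∧ (∀ j, ‖g j‖ ≤ ‖R‖) ∧
      ∀ v, R v = ∑ j, (inner ℂ (g j) v : ℂ) • f j := by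
  have hfin : Module.Finite ℂ (LinearMap.range (R : H →ₗ[ℂ] H)) :=
    Module.rank_lt_aleph0_iff.mp (lt_of_le_of_lt hR (Cardinal.natCast_lt_aleph0))
  let b := stdOrthonormalBasis ℂ (LinearMap.range (R : H →ₗ[ℂ] H))
  have hb : ∀ j, ‖((b j : LinearMap.range (R : H →ₗ[ℂ] H)) : H)‖ = 1 := fun j =>
    b.orthonormal.1 j
  refine ⟨_, fun j => (b j : H), fun j => ContinuousLinearMap.adjoint R (b j : H),
    Module.finrank_le_of_rank_le hR, fun j => (hb j).le, fun j => ?_, fun v => ?_⟩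
  · refine (ContinuousLinearMap.le_opNorm _ _).trans ?_
    rw [hb j, mul_one, LinearIsometryEquiv.norm_map]
  · have h := congrArg (Subtype.val) (b.sum_repr' ⟨R v, ⟨v, rfl⟩⟩)
    simp only [AddSubmonoidClass.coe_finsetSum, Submodule.coe_smul] at h
    rw [← h]
    refine Finset.sum_congr rfl fun j _ => ?_
    rw [ContinuousLinearMap.adjoint_inner_left]
    rfl

section diag
variable {ι : Type*} (b : HilbertBasis ι ℂ H)

lemma cs_basis (f g : H) (s : Finset ι) :
    ∑ i ∈ s, ‖(inner ℂ g (b i) : ℂ)‖ * ‖(inner ℂ (b i) f : ℂ)‖ ≤ ‖g‖ * ‖f‖ := by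
  refine (Real.sum_mul_le_sqrt_mul_sqrt s _ _).trans ?_
  have h1 := b.orthonormal.sum_inner_products_le (s := s) f
  have h2 := b.orthonormal.sum_inner_products_le (s := s) g
  refine mul_le_mul ?_ ?_ (Real.sqrt_nonneg _) (norm_nonneg _)
  · refine Real.sqrt_le_iff.mpr ⟨norm_nonneg _, le_trans (le_of_eq ?_) h2⟩
    refine Finset.sum_congr rfl fun i _ => ?_
    rw [norm_inner_symm]
  · exact Real.sqrt_le_iff.mpr ⟨norm_nonneg _, h1⟩

lemma diag_fin {R : H →L[ℂ] H} {n : ℕ} (hR : RkLe R n) (s : Finset ι) :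
    ∑ i ∈ s, ‖(inner ℂ (b i) (R (b i)) : ℂ)‖ ≤ n * ‖R‖ := by
  obtain ⟨r, f, g, hr, hf, hg, hRv⟩ := rk_decomp hR
  calc ∑ i ∈ s, ‖(inner ℂ (b i) (R (b i)) : ℂ)‖
      ≤ ∑ i ∈ s, ∑ j, ‖(inner ℂ (g j) (b i) : ℂ)‖ * ‖(inner ℂ (b i) (f j) : ℂ)‖ := by
        refine Finset.sum_le_sum fun i _ => ?_
        rw [hRv, inner_sum]
        refine (norm_sum_le _ _).trans (le_of_eq ?_)
        refine Finset.sum_congr rfl fun j _ => ?_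
        rw [inner_smul_right, norm_mul]
    _ = ∑ j, ∑ i ∈ s, ‖(inner ℂ (g j) (b i) : ℂ)‖ * ‖(inner ℂ (b i) (f j) : ℂ)‖ :=
        Finset.sum_comm
    _ ≤ ∑ j : Fin r, ‖R‖ := by
        refine Finset.sum_le_sum fun j _ => (cs_basis b (f j) (g j) s).trans ?_
        calc ‖g j‖ * ‖f j‖ ≤ ‖R‖ * 1 :=
              mul_le_mul (hg j) (hf j) (norm_nonneg _) (norm_nonneg _)
          _ = ‖R‖ := mul_one _
    _ = r * ‖R‖ := by simp
    _ ≤ n * ‖R‖ := by gcongr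

lemma trace_fin_comm {R : H →L[ℂ] H} {n : ℕ} (hR : RkLe R n) (B : H →L[ℂ] H) :
    ∑' i, (inner ℂ (b i) ((R * B) (b i)) : ℂ) = ∑' i, (inner ℂ (b i) ((B * R) (b i)) : ℂ) := by
  obtain ⟨r, f, g, hr, hf, hg, hRv⟩ := rk_decomp hR
  have h1 : HasSum (fun i => (inner ℂ (b i) ((R * B) (b i)) : ℂ))
      (∑ j, (inner ℂ (g j) (B (f j)) : ℂ)) := by
    have : (fun i => (inner ℂ (b i) ((R * B) (b i)) : ℂ)) = fun i => ∑ j,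
        (inner ℂ (ContinuousLinearMap.adjoint B (g j)) (b i) : ℂ) * (inner ℂ (b i) (f j) : ℂ) := by
      funext i
      rw [mul_apply_eq_comp, hRv, inner_sum]
      refine Finset.sum_congr rfl fun j _ => ?_
      rw [inner_smul_right, ContinuousLinearMap.adjoint_inner_left]
    rw [this]
    refine hasSum_sum fun j _ => ?_
    have := b.hasSum_inner_mul_inner (ContinuousLinearMap.adjoint B (g j)) (f j)
    rwa [ContinuousLinearMap.adjoint_inner_left B] at this
  have h2 : HasSum (fun i => (inner ℂ (b i) ((B * R) (b i)) : ℂ))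
      (∑ j, (inner ℂ (g j) (B (f j)) : ℂ)) := by
    have : (fun i => (inner ℂ (b i) ((B * R) (b i)) : ℂ)) = fun i => ∑ j,
        (inner ℂ (g j) (b i) : ℂ) * (inner ℂ (b i) (B (f j)) : ℂ) := by
      funext i
      rw [mul_apply_eq_comp, hRv, map_sum, inner_sum]
      refine Finset.sum_congr rfl fun j _ => ?_
      rw [map_smul, inner_smul_right]
    rw [this]
    exact hasSum_sum fun j _ => b.hasSum_inner_mul_inner (g j) (B (f j))
  rw [h1.tsum_eq, h2.tsum_eq]

lemma diag_bound {T : H →L[ℂ] H} (hT : Summable (sval T)) (s : Finset ι) :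
    ∑ i ∈ s, ‖(inner ℂ (b i) (T (b i)) : ℂ)‖ ≤ ‖T‖ + 19 * ∑' n, sval T n := by
  set Sa := ∑' n, sval T n with hSa
  have hone : sval T 1 ≤ Sa := hT.le_tsum 1 fun j _ => sval_nonneg T j
  have hcond : ∀ K : ℕ, ∑ k ∈ Finset.range K, (2 : ℝ) ^ k * sval T (2 ^ k) ≤ 3 * Sa := by
    intro K
    have h := Finset.sum_condensed_le (f := sval T) (fun m n _ h => sval_antitone T h) K
    simp only [nsmul_eq_mul, Nat.cast_pow, Nat.cast_ofNat] at h
    rw [Finset.sum_range_succ] at h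
    have h2 : ∑ k ∈ Finset.Ico 2 (2 ^ K + 1), sval T k ≤ Sa :=
      hT.sum_le_tsum _ fun j _ => sval_nonneg T j
    have h3 : 0 ≤ (2 : ℝ) ^ K * sval T (2 ^ K) := mul_nonneg (by positivity) (sval_nonneg _ _)
    linarith
  refine le_of_forall_pos_le_add fun δ' hδ' => ?_
  obtain ⟨δ, hδ, hδe⟩ : ∃ δ : ℝ, 0 < δ ∧ 13 * δ = δ' := ⟨δ' / 13, by positivity, by ring⟩
  have hex : ∀ k : ℕ, ∃ R : H →L[ℂ] H, RkLe R (2 ^ k) ∧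
      ‖T - R‖ < sval T (2 ^ k) + δ * (1 / 4) ^ k := fun k =>
    sval_exists T (2 ^ k) (by positivity)
  choose R hR hRn using hex
  have hstep : ∀ k, ∑ i ∈ s, ‖(inner ℂ (b i) ((R (k + 1) - R k) (b i)) : ℂ)‖ ≤
      6 * ((2 : ℝ) ^ k * sval T (2 ^ k)) + 6 * δ * (1 / 2) ^ k := by
    intro k
    have hrk : RkLe (R (k + 1) - R k) (2 ^ (k + 1) + 2 ^ k) := by
      rw [sub_eq_add_neg]; exact (hR (k + 1)).add (hR k).neg
    refine (diag_fin b hrk s).trans ?_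
    have hn : ‖R (k + 1) - R k‖ ≤ 2 * sval T (2 ^ k) + 2 * δ * (1 / 4) ^ k := by
      have e : R (k + 1) - R k = (T - R k) - (T - R (k + 1)) := by abel
      rw [e]
      refine (norm_sub_le _ _).trans ?_
      have h1 := hRn k
      have h2 := hRn (k + 1)
      have h3 : sval T (2 ^ (k + 1)) ≤ sval T (2 ^ k) :=
        sval_antitone T (Nat.pow_le_pow_right (by norm_num) (Nat.le_succ k))
      have h4 : δ * (1 / 4) ^ (k + 1) ≤ δ * (1 / 4) ^ k := by
        refine mul_le_mul_of_nonneg_left ?_ hδ.le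
        exact pow_le_pow_of_le_one (by norm_num) (by norm_num) (Nat.le_succ k)
      linarith
    have e2 : ((1 : ℝ) / 2) ^ k = 2 ^ k * (1 / 4) ^ k := by
      rw [← mul_pow]; norm_num
    calc ((2 ^ (k + 1) + 2 ^ k : ℕ) : ℝ) * ‖R (k + 1) - R k‖
        ≤ ((2 ^ (k + 1) + 2 ^ k : ℕ) : ℝ) * (2 * sval T (2 ^ k) + 2 * δ * (1 / 4) ^ k) := by
          gcongr
      _ = 6 * ((2 : ℝ) ^ k * sval T (2 ^ k)) + 6 * δ * (1 / 2) ^ k := by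
          rw [e2]; push_cast; ring
  have hgeo : ∀ K, ∑ k ∈ Finset.range K, ((1 : ℝ) / 2) ^ k ≤ 2 := by
    intro K
    have := Summable.sum_le_tsum (f := fun k : ℕ => ((1 : ℝ) / 2) ^ k) (Finset.range K)
      (fun _ _ => by positivity) summable_geometric_two
    rwa [tsum_geometric_two] at this
  have hK : ∀ K, ∑ i ∈ s, ‖(inner ℂ (b i) (R K (b i)) : ℂ)‖ ≤
      ‖T‖ + Sa + δ + (18 * Sa + 12 * δ) := by
    intro K
    have h1 : ∑ i ∈ s, ‖(inner ℂ (b i) (R K (b i)) : ℂ)‖ ≤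
        ∑ i ∈ s, ‖(inner ℂ (b i) (R 0 (b i)) : ℂ)‖ +
        ∑ k ∈ Finset.range K, (6 * ((2 : ℝ) ^ k * sval T (2 ^ k)) + 6 * δ * (1 / 2) ^ k) := by
      induction K with
      | zero => simp
      | succ K ih =>
        rw [Finset.sum_range_succ, ← add_assoc]
        refine le_trans ?_ (add_le_add ih (hstep K))
        rw [← Finset.sum_add_distrib]
        refine Finset.sum_le_sum fun i _ => ?_
        refine le_trans (le_of_eq ?_) (norm_add_le _ _)
        rw [← inner_add_right]
        simp
    have h2 : ∑ i ∈ s, ‖(inner ℂ (b i) (R 0 (b i)) : ℂ)‖ ≤ ‖T‖ + Sa + δ := by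
      refine (diag_fin b (hR 0) s).trans ?_
      have h3 := hRn 0
      simp only [pow_zero, mul_one, Nat.cast_one, one_mul] at h3 ⊢
      have h4 : ‖R 0‖ ≤ ‖T‖ + ‖T - R 0‖ := by
        have := norm_sub_le T (T - R 0)
        simpa using this
      linarith
    rw [Finset.sum_add_distrib, ← Finset.mul_sum, ← Finset.mul_sum] at h1
    have h5 := hcond K
    have h6 : 6 * δ * ∑ k ∈ Finset.range K, ((1 : ℝ) / 2) ^ k ≤ 6 * δ * 2 := by
      gcongr
      exact hgeo K
    linarith
  have hlim : Filter.Tendsto (fun K => ‖T - R K‖) Filter.atTop (nhds 0) := by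
    have h1 : Filter.Tendsto (fun k : ℕ => sval T (2 ^ k) + δ * (1 / 4) ^ k)
        Filter.atTop (nhds (0 + δ * 0)) := by
      refine Filter.Tendsto.add ?_ (Filter.Tendsto.const_mul _ ?_)
      · exact hT.tendsto_atTop_zero.comp (tendsto_pow_atTop_atTop_of_one_lt (by norm_num))
      · exact tendsto_pow_atTop_nhds_zero_of_lt_one (by norm_num) (by norm_num)
    simp only [mul_zero, add_zero] at h1
    exact squeeze_zero (fun _ => norm_nonneg _) (fun k => (hRn k).le) h1
  have hfin : ∀ K, ∑ i ∈ s, ‖(inner ℂ (b i) (T (b i)) : ℂ)‖ ≤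
      ‖T‖ + Sa + δ + (18 * Sa + 12 * δ) + s.card * ‖T - R K‖ := by
    intro K
    refine le_trans ?_ (add_le_add_left (hK K) _)
    have : (s.card : ℝ) * ‖T - R K‖ = ∑ i ∈ s, ‖T - R K‖ := by simp
    rw [this, ← Finset.sum_add_distrib]
    refine Finset.sum_le_sum fun i _ => ?_
    have e : (inner ℂ (b i) (T (b i)) : ℂ) =
        inner ℂ (b i) (R K (b i)) + inner ℂ (b i) ((T - R K) (b i)) := by
      rw [← inner_add_right]; simp
    rw [e]
    refine (norm_add_le _ _).trans (add_le_add_right ?_ _)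
    refine (norm_inner_le_norm _ _).trans ?_
    have hb : ‖b i‖ = 1 := b.orthonormal.1 i
    have := ContinuousLinearMap.le_opNorm (T - R K) (b i)
    rw [hb] at this ⊢
    linarith
  have hl2 : Filter.Tendsto (fun K => ‖T‖ + Sa + δ + (18 * Sa + 12 * δ) + s.card * ‖T - R K‖)
      Filter.atTop (nhds (‖T‖ + Sa + δ + (18 * Sa + 12 * δ) + s.card * 0)) :=
    (hlim.const_mul _).const_add _
  have := ge_of_tendsto' hl2 hfin
  linarith

lemma diag_summable {T : H →L[ℂ] H} (hT : Summable (sval T)) :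
    Summable (fun i => (inner ℂ (b i) (T (b i)) : ℂ)) :=
  Summable.of_norm (summable_of_sum_le (fun _ => norm_nonneg _) (diag_bound b hT))

lemma diag_tsum_le {T : H →L[ℂ] H} (hT : Summable (sval T)) :
    ‖∑' i, (inner ℂ (b i) (T (b i)) : ℂ)‖ ≤ ‖T‖ + 19 * ∑' n, sval T n := by
  have h := summable_of_sum_le (fun _ => norm_nonneg _) (diag_bound b hT)
  exact (norm_tsum_le_tsum_norm h).trans (h.tsum_le_of_sum_le (diag_bound b hT))

end diag

lemma opTrace_le {T : H →L[ℂ] H} (hT : Summable (sval T)) :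
    ‖opTrace T‖ ≤ ‖T‖ + 19 * ∑' n, sval T n := diag_tsum_le _ hT

lemma opTrace_add {S T : H →L[ℂ] H} (hS : Summable (sval S)) (hT : Summable (sval T)) :
    opTrace (S + T) = opTrace S + opTrace T := by
  unfold opTrace
  rw [← (diag_summable _ hS).tsum_add (diag_summable _ hT)]
  simp [inner_add_right]

lemma opTrace_smul (c : ℂ) (T : H →L[ℂ] H) : opTrace (c • T) = c * opTrace T := by
  unfold opTrace
  rw [← tsum_mul_left]
  simp [inner_smul_right]

lemma opTrace_fin_comm {R : H →L[ℂ] H} {n : ℕ} (hR : RkLe R n) (B : H →L[ℂ] H) :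
    opTrace (R * B) = opTrace (B * R) := trace_fin_comm _ hR B

lemma summable_div {g : ℕ → ℝ} (hg : Summable g) (hg0 : 0 ≤ g) (c : ℕ) (hc : 0 < c) :
    Summable (fun n => g (n / c)) := by
  have : NeZero c := ⟨hc.ne'⟩
  have h := Summable.mul_of_nonneg (f := g) (g := fun _ : Fin c => (1 : ℝ)) hg
    (Summable.of_finite) hg0 (fun _ => zero_le_one)
  have h2 := (Nat.divModEquiv c).summable_iff.mpr h
  refine h2.congr fun n => ?_
  simp [Nat.divModEquiv]

lemma summable_of_mul_le {f g : ℕ → ℝ} (hf : Antitone f) (hf0 : 0 ≤ f) (hg : Summable g)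
    (c : ℕ) (hc : 0 < c) (h : ∀ n, f (c * n) ≤ g n) : Summable f := by
  refine Summable.of_nonneg_of_le hf0 (fun n => ?_)
    (summable_div hg (fun n => (hf0 (c * n)).trans (h n)) c hc)
  exact (hf (Nat.mul_div_le n c)).trans (h _)

lemma sval_three (X Y : H →L[ℂ] H) (n : ℕ) :
    sval (X * Y) n ≤ sval X (2 * (n / 3)) * sval Y (n / 3) ∧
    sval (Y * X) n ≤ sval X (2 * (n / 3)) * sval Y (n / 3) := by
  have h1 := sval_mul X Y (2 * (n / 3)) (n / 3)
  have h2 := sval_mul Y X (n / 3) (2 * (n / 3))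
  rw [mul_comm (sval Y _)] at h2
  exact ⟨(sval_antitone _ (by omega)).trans h1, (sval_antitone _ (by omega)).trans h2⟩

lemma opTrace_comm_aux {A B : H →L[ℂ] H} (hA : Filter.Tendsto (sval A) Filter.atTop (nhds 0))
    (hAB : Summable (fun n => sval A n * sval B n)) :
    opTrace (A * B) = opTrace (B * A) := by
  have hex : ∀ k : ℕ, ∃ R : H →L[ℂ] H, RkLe R k ∧
      ‖A - R‖ < sval A k + (1 / 2) ^ k := fun k => sval_exists A k (by positivity)
  choose R hR hRn using hex
  have hlim : Filter.Tendsto (fun K => ‖A - R K‖) Filter.atTop (nhds 0) := by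
    have h1 : Filter.Tendsto (fun k : ℕ => sval A k + (1 / 2) ^ k)
        Filter.atTop (nhds (0 + 0)) := by
      refine Filter.Tendsto.add hA ?_
      exact tendsto_pow_atTop_nhds_zero_of_lt_one (by norm_num) (by norm_num)
    simp only [add_zero] at h1
    exact squeeze_zero (fun _ => norm_nonneg _) (fun k => (hRn k).le) h1
  have hpow : ∀ {n k : ℕ}, n ≤ k → ((1 : ℝ) / 2) ^ k ≤ (1 / 2) ^ n := fun h =>
    pow_le_pow_of_le_one (by norm_num) (by norm_num) h
  have hdom : ∀ k n, sval (A - R k) (2 * n) ≤ sval A n + (1 / 2) ^ n := by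
    intro k n
    rcases le_total n k with h | h
    · refine (sval_le_norm _ _).trans ((hRn k).le.trans ?_)
      exact add_le_add (sval_antitone A h) (hpow h)
    · have h1 := sval_add A (-R k) n k
      have h2 : sval (-R k) k ≤ 0 := by
        have := sval_le (T := -R k) (hR k).neg
        simpa using this
      rw [← sub_eq_add_neg] at h1
      have h3 : sval (A - R k) (2 * n) ≤ sval (A - R k) (n + k) :=
        sval_antitone _ (by omega)
      have : (0 : ℝ) ≤ (1 / 2) ^ n := by positivity
      linarith
  set g : ℕ → ℝ := fun n => (sval A n + (1 / 2) ^ n) * sval B n with hg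
  have hg0 : 0 ≤ g := fun n => mul_nonneg (add_nonneg (sval_nonneg _ _) (by positivity))
    (sval_nonneg _ _)
  have hgs : Summable g := by
    have h1 : Summable (fun n : ℕ => ((1 : ℝ) / 2) ^ n * sval B n) := by
      refine Summable.of_nonneg_of_le (fun n => mul_nonneg (by positivity) (sval_nonneg _ _))
        (fun n => ?_) (summable_geometric_two.mul_right ‖B‖)
      gcongr
      exact sval_le_norm B n
    refine (hAB.add h1).congr fun n => ?_
    simp only [hg]; ring
  have hgs3 := summable_div hgs hg0 3 (by norm_num)
  have hb1 : ∀ k n, sval (A - R k) (2 * (n / 3)) * sval B (n / 3) ≤ g (n / 3) := fun k n =>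
    mul_le_mul_of_nonneg_right (hdom k _) (sval_nonneg _ _)
  have hgg : ∀ k n, sval (A - R k) (2 * (n / 3)) * sval B (n / 3) ≤ ‖A - R k‖ * ‖B‖ :=
    fun k n => mul_le_mul (sval_le_norm _ _) (sval_le_norm _ _) (sval_nonneg _ _) (norm_nonneg _)
  have hs1 : ∀ k, Summable (sval ((A - R k) * B)) := fun k =>
    Summable.of_nonneg_of_le (sval_nonneg _) (fun n => (sval_three _ _ n).1.trans (hb1 k n)) hgs3
  have hs2 : ∀ k, Summable (sval (B * (A - R k))) := fun k =>
    Summable.of_nonneg_of_le (sval_nonneg _) (fun n => (sval_three _ _ n).2.trans (hb1 k n)) hgs3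
  have hnl : Filter.Tendsto (fun k => ‖A - R k‖ * ‖B‖) Filter.atTop (nhds 0) := by
    simpa using hlim.mul_const ‖B‖
  have ht1 : Filter.Tendsto (fun k => ∑' n, sval ((A - R k) * B) n) Filter.atTop
      (nhds (∑' _ : ℕ, (0 : ℝ))) := by
    refine tendsto_tsum_of_dominated_convergence hgs3 (fun n => ?_)
      (Filter.Eventually.of_forall fun k n => ?_)
    · exact squeeze_zero (fun _ => sval_nonneg _ _)
        (fun k => (sval_three _ _ n).1.trans (hgg k n)) hnl
    · rw [Real.norm_of_nonneg (sval_nonneg _ _)]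
      exact (sval_three _ _ n).1.trans (hb1 k n)
  have ht2 : Filter.Tendsto (fun k => ∑' n, sval (B * (A - R k)) n) Filter.atTop
      (nhds (∑' _ : ℕ, (0 : ℝ))) := by
    refine tendsto_tsum_of_dominated_convergence hgs3 (fun n => ?_)
      (Filter.Eventually.of_forall fun k n => ?_)
    · exact squeeze_zero (fun _ => sval_nonneg _ _)
        (fun k => (sval_three _ _ n).2.trans (hgg k n)) hnl
    · rw [Real.norm_of_nonneg (sval_nonneg _ _)]
      exact (sval_three _ _ n).2.trans (hb1 k n)
  rw [tsum_zero] at ht1 ht2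
  have hRs1 : ∀ k, Summable (sval (R k * B)) := fun k => by
    refine summable_of_ne_finset_zero (s := Finset.range k) fun n hn => ?_
    have hn' : k ≤ n := by simpa using hn
    refine le_antisymm ?_ (sval_nonneg _ _)
    have := sval_le (T := R k * B) (((hR k).mul_right B).mono hn')
    simpa using this
  have hRs2 : ∀ k, Summable (sval (B * R k)) := fun k => by
    refine summable_of_ne_finset_zero (s := Finset.range k) fun n hn => ?_
    have hn' : k ≤ n := by simpa using hn
    refine le_antisymm ?_ (sval_nonneg _ _)
    have := sval_le (T := B * R k) (((hR k).mul_left B).mono hn')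
    simpa using this
  have hmain : ∀ k, ‖opTrace (A * B) - opTrace (B * A)‖ ≤
      (‖A - R k‖ * ‖B‖ + 19 * ∑' n, sval ((A - R k) * B) n) +
      (‖A - R k‖ * ‖B‖ + 19 * ∑' n, sval (B * (A - R k)) n) := by
    intro k
    have e1 : A * B = (A - R k) * B + R k * B := by noncomm_ring
    have e2 : B * A = B * (A - R k) + B * R k := by noncomm_ring
    have e3 : opTrace (A * B) - opTrace (B * A) =
        opTrace ((A - R k) * B) - opTrace (B * (A - R k)) := by
      rw [e1, e2, opTrace_add (hs1 k) (hRs1 k), opTrace_add (hs2 k) (hRs2 k),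
        opTrace_fin_comm (hR k) B]
      ring
    rw [e3]
    refine (norm_sub_le _ _).trans (add_le_add ?_ ?_)
    · refine (opTrace_le (hs1 k)).trans (add_le_add_left (norm_mul_le _ _) _)
    · refine (opTrace_le (hs2 k)).trans (add_le_add_left ((norm_mul_le _ _).trans ?_) _)
      rw [mul_comm]
  have hz : Filter.Tendsto (fun k => (‖A - R k‖ * ‖B‖ + 19 * ∑' n, sval ((A - R k) * B) n) +
      (‖A - R k‖ * ‖B‖ + 19 * ∑' n, sval (B * (A - R k)) n)) Filter.atTop (nhds 0) := by
    have := (hnl.add (ht1.const_mul 19)).add (hnl.add (ht2.const_mul 19))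
    simpa using this
  have := ge_of_tendsto' hz hmain
  exact sub_eq_zero.mp (norm_le_zero_iff.mp this)

/-! ### Weighted classes -/

/-- `T` has (at least) Schatten weight `k` relative to the exponent `p`. -/
def Wt (p k : ℕ) (T : H →L[ℂ] H) : Prop :=
  ∃ (c : ℕ) (C M : ℝ) (u : ℕ → ℝ), 0 < c ∧ 0 ≤ C ∧ (∀ n, 0 ≤ u n) ∧ (∀ n, u n ≤ M) ∧
    Summable (fun n => u n ^ p) ∧ ∀ n, sval T (c * n) ≤ C * u n ^ k

lemma Wt.bdd (p : ℕ) (hp : 0 < p) (T : H →L[ℂ] H) : Wt p 0 T :=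
  ⟨1, ‖T‖, 0, fun _ => 0, one_pos, norm_nonneg _, fun _ => le_rfl, fun _ => le_rfl,
    by simpa [hp.ne'] using summable_zero, fun n => by simpa using sval_le_norm T n⟩

lemma Wt.pair {p k l : ℕ} {S T : H →L[ℂ] H} (hS : Wt p k S) (hT : Wt p l T) :
    ∃ (c : ℕ) (C M : ℝ) (u : ℕ → ℝ), 0 < c ∧ 0 ≤ C ∧ (∀ n, 0 ≤ u n) ∧ (∀ n, u n ≤ M) ∧
    Summable (fun n => u n ^ p) ∧ (∀ n, sval S (c * n) ≤ C * u n ^ k) ∧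
      (∀ n, sval T (c * n) ≤ C * u n ^ l) := by
  obtain ⟨c, C, M, u, hc, hC, hu, huM, hus, h⟩ := hS
  obtain ⟨c', C', M', u', hc', hC', hu', huM', hus', h'⟩ := hT
  refine ⟨c + c', C + C', M + M', fun n => u n + u' n, by omega, by linarith,
    fun n => add_nonneg (hu n) (hu' n), fun n => add_le_add (huM n) (huM' n), ?_, ?_, ?_⟩
  · refine Summable.of_nonneg_of_le (fun n => pow_nonneg (add_nonneg (hu n) (hu' n)) _)
      (fun n => add_pow_le (hu n) (hu' n) p) ((hus.add hus').mul_left _)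
  · intro n
    refine (sval_antitone S (Nat.mul_le_mul_right n (Nat.le_add_right c c'))).trans
      ((h n).trans ?_)
    have := hu n
    have := hu' n
    gcongr <;> linarith
  · intro n
    refine (sval_antitone T (Nat.mul_le_mul_right n (Nat.le_add_left c' c))).trans
      ((h' n).trans ?_)
    have := hu n
    have := hu' n
    gcongr <;> linarith

lemma Wt.mul {p k l : ℕ} {S T : H →L[ℂ] H} (hS : Wt p k S) (hT : Wt p l T) :
    Wt p (k + l) (S * T) := by
  obtain ⟨c, C, M, u, hc, hC, hu, huM, hus, h, h'⟩ := hS.pair hT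
  refine ⟨c + c, C * C, M, u, by omega, by positivity, hu, huM, hus, fun n => ?_⟩
  rw [add_mul]
  refine (sval_mul S T _ _).trans ?_
  calc _ ≤ (C * u n ^ k) * (C * u n ^ l) :=
        mul_le_mul (h n) (h' n) (sval_nonneg _ _) ((sval_nonneg _ _).trans (h n))
    _ = _ := by ring

lemma Wt.add {p k : ℕ} {S T : H →L[ℂ] H} (hS : Wt p k S) (hT : Wt p k T) :
    Wt p k (S + T) := by
  obtain ⟨c, C, M, u, hc, hC, hu, huM, hus, h, h'⟩ := hS.pair hT
  refine ⟨c + c, C + C, M, u, by omega, by positivity, hu, huM, hus, fun n => ?_⟩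
  rw [add_mul]
  refine (sval_add S T _ _).trans ?_
  linarith [h n, h' n]

lemma Wt.mono {p k l : ℕ} {T : H →L[ℂ] H} (hT : Wt p k T) (hl : l ≤ k) : Wt p l T := by
  obtain ⟨c, C, M, u, hc, hC, hu, huM, hus, h⟩ := hT
  have hM : 0 ≤ M := (hu 0).trans (huM 0)
  refine ⟨c, C * M ^ (k - l), M, u, hc, by positivity, hu, huM, hus, fun n => (h n).trans ?_⟩
  have e : u n ^ k = u n ^ (k - l) * u n ^ l := by rw [← pow_add]; congr 1; omega
  rw [e, mul_assoc]
  have := hu n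
  have := huM n
  gcongr

lemma Wt.smul {p k : ℕ} (hp : 0 < p) {T : H →L[ℂ] H} (hT : Wt p k T) (c : ℂ) :
    Wt p k (c • T) := by
  have := (Wt.bdd p hp (c • (1 : H →L[ℂ] H))).mul hT
  simpa using this

lemma Wt.summable {p : ℕ} {T : H →L[ℂ] H} (hT : Wt p p T) : Summable (sval T) := by
  obtain ⟨c, C, M, u, hc, hC, hu, huM, hus, h⟩ := hT
  exact summable_of_mul_le (sval_antitone T) (sval_nonneg T) (hus.mul_left C) c hc h

lemma opTrace_comm' {p k l : ℕ} (hp : 0 < p) {A B : H →L[ℂ] H} (hA : Wt p k A) (hB : Wt p l B)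
    (hkl : k + l = p) (hk : 0 < k) : opTrace (A * B) = opTrace (B * A) := by
  obtain ⟨c, C, M, u, hc, hC, hu, huM, hus, h, h'⟩ := hA.pair hB
  refine opTrace_comm_aux ?_ ?_
  · have h0 : Filter.Tendsto u Filter.atTop (nhds 0) := by
      have := hus.tendsto_atTop_zero.rpow_const (p := ((p : ℝ)⁻¹)) (Or.inr (by positivity))
      rw [Real.zero_rpow (by positivity)] at this
      refine this.congr fun n => ?_
      exact Real.pow_rpow_inv_natCast (hu n) hp.ne'
    have h1 : Filter.Tendsto (fun n => sval A (c * n)) Filter.atTop (nhds 0) := by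
      refine squeeze_zero (fun _ => sval_nonneg _ _) h ?_
      have := (h0.pow k).const_mul C
      simpa [hk.ne'] using this
    have h2 : Filter.Tendsto (fun n => sval A (c * (n / c))) Filter.atTop (nhds 0) :=
      h1.comp (Nat.tendsto_div_const_atTop hc.ne')
    exact squeeze_zero (fun _ => sval_nonneg _ _)
      (fun n => sval_antitone A (Nat.mul_div_le n c)) h2
  · refine summable_of_mul_le (g := fun n => C * C * u n ^ p) ?_ ?_ (hus.mul_left _) c hc ?_
    · intro m n hmn
      exact mul_le_mul (sval_antitone A hmn) (sval_antitone B hmn) (sval_nonneg _ _)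
        (sval_nonneg _ _)
    · exact fun n => mul_nonneg (sval_nonneg _ _) (sval_nonneg _ _)
    · intro n
      calc _ ≤ (C * u n ^ k) * (C * u n ^ l) :=
            mul_le_mul (h n) (h' n) (sval_nonneg _ _) ((sval_nonneg _ _).trans (h n))
        _ = C * C * u n ^ p := by rw [← hkl]; ring

lemma opTrace_comm {p k l : ℕ} (hp : 0 < p) {A B : H →L[ℂ] H} (hA : Wt p k A) (hB : Wt p l B)
    (hkl : p ≤ k + l) : opTrace (A * B) = opTrace (B * A) := by
  rcases Nat.eq_zero_or_pos k with hk | hk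
  · subst hk
    exact (opTrace_comm' hp (hB.mono (l := p) (by omega)) hA (by omega) hp).symm
  · rcases le_total k p with h | h
    · exact opTrace_comm' hp hA (hB.mono (l := p - k) (by omega)) (by omega) hk
    · exact opTrace_comm' hp (hA.mono h) (hB.mono (Nat.zero_le l)) (by omega) hp

lemma Wt.of_schatten {n : ℕ} {T : H →L[ℂ] H} (hT : MemSchatten ((n : ℝ) + 1) T) :
    Wt (n + 1) 1 T := by
  refine ⟨1, 1, ‖T‖, sval T, one_pos, zero_le_one, sval_nonneg T, sval_le_norm T, ?_, by simp⟩
  have h := hT.2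
  unfold schattenNorm at h
  have hpos : (0 : ℝ) < 1 / ((n : ℝ) + 1) := by positivity
  have h2 : (∑' k : ℕ, ENNReal.ofReal (sval T k ^ ((n : ℝ) + 1))) ≠ ⊤ := by
    intro h3
    rw [h3, ENNReal.top_rpow_of_pos hpos] at h
    exact lt_irrefl _ h
  have h3 := ENNReal.summable_toReal h2
  refine h3.congr fun k => ?_
  rw [ENNReal.toReal_ofReal (Real.rpow_nonneg (sval_nonneg _ _) _)]
  exact_mod_cast Real.rpow_natCast (sval T k) (n + 1)


/-! ### Ordered products -/

lemma opList_zero (f : ℕ → H →L[ℂ] H) (s : ℕ) : opList f s 0 = 1 := by simp [opList]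

lemma opList_succ (f : ℕ → H →L[ℂ] H) (s k : ℕ) :
    opList f s (k + 1) = f s * opList f (s + 1) k := by
  simp [opList, List.range'_succ]

lemma opList_add (f : ℕ → H →L[ℂ] H) (s k l : ℕ) :
    opList f s (k + l) = opList f s k * opList f (s + k) l := by
  induction k generalizing s with
  | zero => simp [opList_zero]
  | succ k ih =>
    rw [show k + 1 + l = (k + l) + 1 by ring, opList_succ, opList_succ, ih, mul_assoc,
      show s + 1 + k = s + (k + 1) by ring]

lemma opList_succ' (f : ℕ → H →L[ℂ] H) (s k : ℕ) :
    opList f s (k + 1) = opList f s k * f (s + k) := by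
  rw [opList_add, opList_succ, opList_zero, mul_one]

lemma opList_congr {f g : ℕ → H →L[ℂ] H} {s t k : ℕ} (h : ∀ i < k, f (s + i) = g (t + i)) :
    opList f s k = opList g t k := by
  induction k with
  | zero => simp [opList_zero]
  | succ k ih =>
    rw [opList_succ', opList_succ', ih fun i hi => h i (by omega), h k (by omega)]

/-! ### The derivation -/

lemma F_dOp {F : H →L[ℂ] H} (hF2 : F * F = 1) (X : H →L[ℂ] H) :
    F * dOp F X = -(dOp F X * F) := by
  unfold dOp
  rw [mul_smul_comm, smul_mul_assoc, ← smul_neg]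
  congr 1
  have h1 : F * (F * X - X * F) = (F * F) * X - F * X * F := by noncomm_ring
  have h2 : (F * X - X * F) * F = F * X * F - X * (F * F) := by noncomm_ring
  rw [h1, h2, hF2]
  noncomm_ring

lemma eps_dOp {ε F : H →L[ℂ] H} (hFε : F * ε = -(ε * F)) {X : H →L[ℂ] H}
    (hX : ε * X = X * ε) : ε * dOp F X = -(dOp F X * ε) := by
  unfold dOp
  rw [mul_smul_comm, smul_mul_assoc, ← smul_neg]
  congr 1
  have h1 : ε * (F * X - X * F) = ε * F * X - ε * X * F := by noncomm_ring
  have h2 : (F * X - X * F) * ε = F * (X * ε) - X * (F * ε) := by noncomm_ring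
  have h3 : F * (ε * X) = (F * ε) * X := by noncomm_ring
  rw [h1, h2, ← hX, h3, hFε, hX]
  noncomm_ring

lemma F_mul_eq (F X : H →L[ℂ] H) : F * X = X * F - Complex.I • dOp F X := by
  unfold dOp
  rw [smul_smul, Complex.I_mul_I]
  simp

lemma dOp_mul (F X Y : H →L[ℂ] H) : dOp F (X * Y) = dOp F X * Y + X * dOp F Y := by
  unfold dOp
  rw [smul_mul_assoc, mul_smul_comm, ← smul_add]
  congr 1
  noncomm_ring

/-- The algebraic setting: a sequence of even operators with Schatten commutators. -/
structure Setup (n : ℕ) (ε F : H →L[ℂ] H) (x : ℕ → H →L[ℂ] H) : Prop where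
  e2 : ε * ε = 1
  f2 : F * F = 1
  fe : F * ε = -(ε * F)
  ev : ∀ k, ε * x k = x k * ε
  wt : ∀ k, Wt (n + 1) 1 (F * x k - x k * F)

namespace Setup
variable {n : ℕ} {ε F : H →L[ℂ] H} {x : ℕ → H →L[ℂ] H}

/-- The differentials of the sequence. -/
def D (F : H →L[ℂ] H) (x : ℕ → H →L[ℂ] H) (k : ℕ) : H →L[ℂ] H := dOp F (x k)

/-- The functional `T(X) = Trace(ε F X)`. -/
def T (ε F X : H →L[ℂ] H) : ℂ := opTrace (ε * F * X)

/-- `x₀ dx₁ ⋯ dx_q x_{q+1} dx_{q+2} ⋯ dx_{n+2}`. -/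
def V (n : ℕ) (F : H →L[ℂ] H) (x : ℕ → H →L[ℂ] H) (q : ℕ) : H →L[ℂ] H :=
  x 0 * opList (D F x) 1 q * x (q + 1) * opList (D F x) (q + 2) (n + 1 - q)

lemma shift (h : Setup n ε F x) (p : ℕ) : Setup n ε F (fun k => x (p + k)) :=
  ⟨h.e2, h.f2, h.fe, fun _ => h.ev _, fun _ => h.wt _⟩

lemma D_shift (p s k : ℕ) : opList (D F fun k => x (p + k)) s k = opList (D F x) (p + s) k :=
  opList_congr fun i _ => by simp [D, add_assoc]

lemma wtD (h : Setup n ε F x) (k : ℕ) : Wt (n + 1) 1 (D F x k) :=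
  (h.wt k).smul (Nat.succ_pos n) _

lemma wt0 (n : ℕ) (X : H →L[ℂ] H) : Wt (n + 1) 0 X := Wt.bdd _ (Nat.succ_pos n) X

lemma wt_mul_left {k : ℕ} {Y : H →L[ℂ] H} (hY : Wt (n + 1) k Y) (X : H →L[ℂ] H) :
    Wt (n + 1) k (X * Y) := by
  simpa using (wt0 n X).mul hY

lemma wt_mul_right {k : ℕ} {Y : H →L[ℂ] H} (hY : Wt (n + 1) k Y) (X : H →L[ℂ] H) :
    Wt (n + 1) k (Y * X) := hY.mul (wt0 n X)

lemma wtL (h : Setup n ε F x) (s k : ℕ) : Wt (n + 1) k (opList (D F x) s k) := by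
  induction k with
  | zero => exact wt0 n _
  | succ k ih => rw [opList_succ']; exact ih.mul (h.wtD _)

lemma wtd (h : Setup n ε F x) (k l : ℕ) : Wt (n + 1) 1 (dOp F (x k * x l)) := by
  rw [dOp_mul]
  exact (wt_mul_right (h.wtD k) _).add (wt_mul_left (h.wtD l) _)

lemma F_L (h : Setup n ε F x) (s k : ℕ) :
    F * opList (D F x) s k = (-1 : ℂ) ^ k • (opList (D F x) s k * F) := by
  induction k with
  | zero => simp [opList_zero]
  | succ k ih =>
    rw [opList_succ', ← mul_assoc, ih, smul_mul_assoc, mul_assoc, show F * D F x (s + k) =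
      -(D F x (s + k) * F) from F_dOp h.f2 _, pow_succ, mul_smul, mul_neg, mul_assoc]
    simp

lemma e_L (h : Setup n ε F x) (s k : ℕ) :
    ε * opList (D F x) s k = (-1 : ℂ) ^ k • (opList (D F x) s k * ε) := by
  induction k with
  | zero => simp [opList_zero]
  | succ k ih =>
    rw [opList_succ', ← mul_assoc, ih, smul_mul_assoc, mul_assoc, show ε * D F x (s + k) =
      -(D F x (s + k) * ε) from eps_dOp h.fe (h.ev _), pow_succ, mul_smul, mul_neg, mul_assoc]
    simp

lemma sgn_sq (k : ℕ) : (-1 : ℂ) ^ k * (-1 : ℂ) ^ k = 1 := by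
  rw [← mul_pow]; simp

lemma eF_L (h : Setup n ε F x) (s k : ℕ) :
    ε * F * opList (D F x) s k = opList (D F x) s k * (ε * F) := by
  rw [mul_assoc, h.F_L, mul_smul_comm, ← mul_assoc, h.e_L, smul_mul_assoc, smul_smul, sgn_sq,
    one_smul, mul_assoc]

lemma T_add {X Y : H →L[ℂ] H} (hX : Wt (n + 1) (n + 1) X) (hY : Wt (n + 1) (n + 1) Y) :
    T ε F (X + Y) = T ε F X + T ε F Y := by
  unfold T
  rw [mul_add]
  exact opTrace_add (wt_mul_left hX _).summable (wt_mul_left hY _).summable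

lemma T_smul (c : ℂ) (X : H →L[ℂ] H) : T ε F (c • X) = c * T ε F X := by
  unfold T
  rw [mul_smul_comm, opTrace_smul]

/-- Cyclicity of `T` with respect to products of differentials. -/
lemma T_cyc (h : Setup n ε F x) {s k l : ℕ} {X : H →L[ℂ] H} (hX : Wt (n + 1) l X)
    (hkl : n + 1 ≤ k + l) :
    T ε F (opList (D F x) s k * X) = T ε F (X * opList (D F x) s k) := by
  unfold T
  rw [← mul_assoc, h.eF_L, mul_assoc, opTrace_comm (Nat.succ_pos n) (h.wtL s k)
    (wt_mul_left hX (ε * F)) hkl, mul_assoc]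

lemma tele (f : ℕ → ℂ) (N : ℕ) :
    ∑ q ∈ Finset.range N, (-1 : ℂ) ^ q * (f (q + 1) + f q) = f 0 - (-1) ^ N * f N := by
  induction N with
  | zero => simp
  | succ N ih => rw [Finset.sum_range_succ, ih, pow_succ]; ring

lemma wtV (h : Setup n ε F x) {q : ℕ} (hq : q ≤ n + 1) : Wt (n + 1) (n + 1) (V n F x q) := by
  have h1 := (wt_mul_right (wt_mul_left (h.wtL 1 q) (x 0)) (x (q + 1))).mul
    (h.wtL (q + 2) (n + 1 - q))
  rwa [show q + (n + 1 - q) = n + 1 by omega] at h1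

lemma V_step {q : ℕ} (hq : q ≤ n) :
    x 0 * opList (D F x) 1 q * dOp F (x (q + 1) * x (q + 2)) * opList (D F x) (q + 3) (n - q)
      = V n F x (q + 1) + V n F x q := by
  unfold V
  rw [show n + 1 - (q + 1) = n - q by omega, show n + 1 - q = (n - q) + 1 by omega,
    opList_succ', opList_succ (D F x) (q + 2), dOp_mul, show 1 + q = q + 1 by omega]
  simp only [D, add_assoc]
  noncomm_ring

/-- Merging two consecutive entries. -/
def merge {B : Type*} [Mul B] (q : ℕ) (c : ℕ → B) (k : ℕ) : B :=
  if k < q then c k else if k = q then c k * c (k + 1) else c (k + 1)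

/-- The basic cochain `T(y₀ dy₁ ⋯ dy_{n+1})`. -/
def Phi0 (n : ℕ) (ε F : H →L[ℂ] H) (y : ℕ → H →L[ℂ] H) : ℂ :=
  T ε F (y 0 * opList (D F y) 1 (n + 1))

lemma bprime (h : Setup n ε F x) (hn : Even n) :
    ∑ q ∈ Finset.range (n + 2), (-1 : ℂ) ^ q * Phi0 n ε F (merge q x) =
      - T ε F (V n F x (n + 1)) := by
  rw [Finset.sum_range_succ']
  have h0 : Phi0 n ε F (merge 0 x) = T ε F (V n F x 0) := by
    unfold Phi0 V
    congr 1
    rw [opList_zero, mul_one]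
    congr 1
    exact opList_congr fun i _ => by
      simp [D, merge, show 1 + i + 1 = 0 + 2 + i by ring]
  have h1 : ∀ q ∈ Finset.range (n + 1), (-1 : ℂ) ^ (q + 1) * Phi0 n ε F (merge (q + 1) x) =
      - ((-1 : ℂ) ^ q * (T ε F (V n F x (q + 1)) + T ε F (V n F x q))) := by
    intro q hq
    have hq' : q ≤ n := by have := Finset.mem_range.mp hq; omega
    rw [← T_add (h.wtV (by omega)) (h.wtV (by omega)), ← V_step hq', pow_succ]
    have : Phi0 n ε F (merge (q + 1) x) = T ε F (x 0 * opList (D F x) 1 q *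
        dOp F (x (q + 1) * x (q + 2)) * opList (D F x) (q + 3) (n - q)) := by
      unfold Phi0
      congr 1
      rw [show n + 1 = q + ((n - q) + 1) by omega, opList_add, opList_succ]
      have e1 : opList (D F (merge (q + 1) x)) 1 q = opList (D F x) 1 q :=
        opList_congr fun i hi => by
          simp only [D, merge]
          rw [if_pos (by omega)]
      have e2 : opList (D F (merge (q + 1) x)) (1 + q + 1) (n - q) =
          opList (D F x) (q + 3) (n - q) :=
        opList_congr fun i hi => by
          simp only [D, merge]
          rw [if_neg (by omega), if_neg (by omega)]
          congr 2; omega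
      have e3 : D F (merge (q + 1) x) (1 + q) = dOp F (x (q + 1) * x (q + 2)) := by
        simp only [D, merge]
        rw [if_neg (by omega), if_pos (by omega), show 1 + q + 1 = q + 2 by omega,
          show 1 + q = q + 1 by omega]
      rw [e1, e2, e3]
      simp [merge, mul_assoc]
    rw [this]
    ring
  rw [Finset.sum_congr rfl h1, Finset.sum_neg_distrib, tele (fun q => T ε F (V n F x q)), h0]
  simp only [pow_succ, hn.neg_one_pow]
  ring

/-- For `y` commuting with `F`. -/
lemma half (h : Setup n ε F x) {y : H →L[ℂ] H} (hy : Wt (n + 1) (n + 1) y)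
    (hFy : F * y = y * F) (z : H →L[ℂ] H) :
    2 * opTrace (ε * z * y) = - Complex.I * T ε F (dOp F z * y) := by
  have w1 : Wt (n + 1) (n + 1) (ε * z * y) := wt_mul_left hy _
  have e1 : opTrace (ε * z * y) = opTrace ((-1 : ℂ) • (ε * F * z * F * y)) := by
    have a1 : ε * z * y = (ε * z * y * F) * F := by rw [mul_assoc _ F F, h.f2, mul_one]
    have a2 : F * (ε * z * y * F) = (-1 : ℂ) • (ε * F * z * F * y) := by
      have : F * (ε * z * y * F) = (F * ε) * z * (y * F) := by noncomm_ring
      rw [this, h.fe, ← hFy]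
      simp [mul_assoc]
    rw [a1, opTrace_comm (Nat.succ_pos n) (wt_mul_right w1 F) (wt0 n F) (by omega), a2]
  have e2 : (-Complex.I) * T ε F (dOp F z * y) =
      opTrace (ε * z * y + (-1 : ℂ) • (ε * F * z * F * y)) := by
    rw [← T_smul]
    unfold T dOp
    congr 1
    rw [smul_mul_assoc, smul_smul, neg_mul, Complex.I_mul_I, neg_neg, one_smul]
    have : ε * F * ((F * z - z * F) * y) = ε * (F * F) * z * y - ε * F * z * F * y := by
      noncomm_ring
    rw [this, h.f2]
    simp [sub_eq_add_neg]
  have w2 : Wt (n + 1) (n + 1) ((-1 : ℂ) • (ε * F * z * F * y)) :=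
    (wt_mul_left hy _).smul (Nat.succ_pos n) _
  rw [e2, opTrace_add w1.summable w2.summable, ← e1]
  ring

lemma claim2 (h : Setup n ε F x) (hn : Even n) :
    T ε F (V n F x (n + 1)) = T ε F (x (n + 2) * x 0 * opList (D F x) 1 (n + 1)) -
      2⁻¹ * T ε F (D F x (n + 2) * opList (D F x) 0 (n + 2)) := by
  set z := x (n + 2) with hz
  set Y := opList (D F x) 1 (n + 1) with hY
  have wY : Wt (n + 1) (n + 1) Y := h.wtL _ _
  have hFY : F * Y = -(Y * F) := by
    rw [hY, h.F_L, pow_succ, hn.neg_one_pow]; simp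
  have hV : V n F x (n + 1) = x 0 * Y * z := by
    unfold V
    simp [opList_zero, hz, hY]
  have e1 : T ε F (x 0 * Y * z) = T ε F (z * x 0 * Y) +
      Complex.I * opTrace (ε * dOp F z * (x 0 * Y)) := by
    have w : Wt (n + 1) (n + 1) (ε * F * (x 0 * Y)) := wt_mul_left (wt_mul_left wY _) _
    unfold T
    rw [← mul_assoc, opTrace_comm (Nat.succ_pos n) w (wt0 n z) (by omega)]
    have hzF : z * F = F * z + Complex.I • dOp F z := by rw [F_mul_eq F z]; simp
    have : z * (ε * F * (x 0 * Y)) = ε * F * (z * x 0 * Y) +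
        Complex.I • (ε * dOp F z * (x 0 * Y)) := by
      have a1 : z * (ε * F * (x 0 * Y)) = (z * ε) * F * (x 0 * Y) := by noncomm_ring
      have a2 : (ε * z) * F * (x 0 * Y) = ε * (z * F) * (x 0 * Y) := by noncomm_ring
      rw [a1, ← h.ev, a2, hzF, mul_add, add_mul, mul_smul_comm, smul_mul_assoc]
      congr 1
    rw [this, opTrace_add, opTrace_smul]
    · exact (wt_mul_left (wt_mul_left wY _) _).summable
    · exact ((wt_mul_left (wt_mul_left wY _) _).smul (Nat.succ_pos n) _).summable
  have hcomm : ∀ X, F * (dOp F X * Y) = dOp F X * Y * F := by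
    intro X
    rw [← mul_assoc, F_dOp h.f2, neg_mul, mul_assoc, hFY]
    noncomm_ring
  have e2 : opTrace (ε * dOp F z * (x 0 * Y)) = - opTrace (ε * z * (dOp F (x 0) * Y)) := by
    have b1 := h.half (wt_mul_left wY (dOp F (z * x 0))) (hcomm _) 1
    have b2 : dOp F (1 : H →L[ℂ] H) = 0 := by simp [dOp]
    rw [b2, zero_mul] at b1
    have b3 : T ε F 0 = 0 := by simpa using T_smul (ε := ε) (F := F) 0 0
    rw [b3, mul_one, mul_zero] at b1
    have b4 : ε * (dOp F (z * x 0) * Y) = ε * dOp F z * (x 0 * Y) +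
        ε * z * (dOp F (x 0) * Y) := by
      rw [dOp_mul]; noncomm_ring
    rw [b4, opTrace_add (wt_mul_left (wt_mul_left wY _) _).summable
      (wt_mul_left (wt_mul_left wY _) _).summable] at b1
    have b5 := (mul_eq_zero.mp b1).resolve_left two_ne_zero
    exact eq_neg_of_add_eq_zero_left b5
  have e3 := h.half (wt_mul_left wY (dOp F (x 0))) (hcomm _) z
  have e4 : D F x (n + 2) * opList (D F x) 0 (n + 2) = dOp F z * (dOp F (x 0) * Y) := by
    rw [opList_succ]; rfl
  rw [hV, e1, e2, e4]
  have e5 : opTrace (ε * z * (dOp F (x 0) * Y)) =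
      2⁻¹ * (-Complex.I * T ε F (dOp F z * (dOp F (x 0) * Y))) := by
    rw [← e3]; ring
  rw [e5]
  have := Complex.I_mul_I
  linear_combination (2⁻¹ * T ε F (dOp F z * (dOp F (x 0) * Y))) * this

lemma gComm_even (he : ε * ε = 1) {θ : H →L[ℂ] H} (hθ : ε * θ = θ * ε) :
    gComm ε F θ = F * θ - θ * F := by
  have h1 : ε * θ * ε = θ := by rw [hθ, mul_assoc, he, mul_one]
  have h2 : evenPart ε θ = θ := by
    unfold evenPart
    rw [h1, ← two_smul ℂ θ, smul_smul]; norm_num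
  have h3 : oddPart ε θ = 0 := by
    unfold oddPart
    rw [h1, sub_self, smul_zero]
  unfold gComm
  rw [h2, h3]; simp

lemma gComm_odd (he : ε * ε = 1) {θ : H →L[ℂ] H} (hθ : ε * θ = -(θ * ε)) :
    gComm ε F θ = F * θ + θ * F := by
  have h1 : ε * θ * ε = -θ := by rw [hθ, neg_mul, mul_assoc, he, mul_one]
  have h2 : oddPart ε θ = θ := by
    unfold oddPart
    rw [h1, sub_neg_eq_add, ← two_smul ℂ θ, smul_smul]; norm_num
  have h3 : evenPart ε θ = 0 := by
    unfold evenPart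
    rw [h1, add_neg_cancel, smul_zero]
  unfold gComm
  rw [h2, h3]; simp

lemma claim5 (h : Setup n ε F x) (hn : Even n) :
    Trs ε F (x 0 * opList (D F x) 1 (n + 2)) =
      -(Complex.I / 2) * T ε F (opList (D F x) 0 (n + 3)) := by
  set Y := opList (D F x) 1 (n + 2) with hY
  have s : (-1 : ℂ) ^ (n + 2) = 1 := by rw [pow_add, hn.neg_one_pow]; norm_num
  have hF : F * Y = Y * F := by rw [hY, h.F_L, s, one_smul]
  have he : ε * Y = Y * ε := by rw [hY, h.e_L, s, one_smul]
  have hθ : ε * (x 0 * Y) = x 0 * Y * ε := by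
    rw [← mul_assoc, h.ev, mul_assoc, he, mul_assoc]
  have hg : gComm ε F (x 0 * Y) = (-Complex.I) • opList (D F x) 0 (n + 3) := by
    rw [gComm_even h.e2 hθ, opList_succ, ← mul_assoc, F_mul_eq F (x 0), sub_mul, mul_assoc,
      hF, mul_assoc (x 0)]
    simp [D, hY]
  unfold Trs
  rw [hg, mul_smul_comm, opTrace_smul]
  unfold T
  ring

lemma claim4 (h : Setup n ε F x) (hn : Even n) :
    Trs ε F (x 0 * x 1 * opList (D F x) 2 (n + 1)) = 0 := by
  set Y := opList (D F x) 2 (n + 1) with hY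
  have s : (-1 : ℂ) ^ (n + 1) = -1 := by rw [pow_add, hn.neg_one_pow]; norm_num
  have hF : F * Y = -(Y * F) := by rw [hY, h.F_L, s]; simp
  have he : ε * Y = -(Y * ε) := by rw [hY, h.e_L, s]; simp
  have hz : ε * (x 0 * x 1) = x 0 * x 1 * ε := by
    rw [← mul_assoc, h.ev, mul_assoc, h.ev, mul_assoc]
  set z := x 0 * x 1 with hzd
  have hθ : ε * (z * Y) = -(z * Y * ε) := by
    rw [← mul_assoc, hz, mul_assoc z, he, mul_neg, mul_assoc z]
  have hg : gComm ε F (z * Y) = (-Complex.I) • (dOp F z * Y) := by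
    rw [gComm_odd h.e2 hθ, ← mul_assoc, F_mul_eq F z, sub_mul, mul_assoc,
      hF, mul_assoc z]
    simp only [mul_neg, smul_mul_assoc, neg_smul]
    abel
  have wY : Wt (n + 1) (n + 1) Y := h.wtL _ _
  set w := dOp F z * Y with hw
  have hew : ε * w = w * ε := by
    rw [hw, ← mul_assoc, eps_dOp h.fe hz, neg_mul, mul_assoc, he]
    noncomm_ring
  have ww : Wt (n + 1) (n + 1) w := wt_mul_left wY _
  have h0 : opTrace (ε * F * w) = - opTrace (ε * F * w) := by
    have a1 : ε * F * w = (ε * F * w * ε) * ε := by rw [mul_assoc _ ε ε, h.e2, mul_one]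
    have a2 : ε * (ε * F * w * ε) = (-1 : ℂ) • (ε * F * w) := by
      have : ε * (ε * F * w * ε) = (ε * ε) * F * (w * ε) := by noncomm_ring
      rw [this, h.e2, one_mul, ← hew, ← mul_assoc, h.fe]
      simp
    conv_lhs => rw [a1]
    rw [opTrace_comm (Nat.succ_pos n) (wt_mul_right (wt_mul_left ww _) ε) (wt0 n ε) (by omega),
      a2, opTrace_smul]
    ring
  have h1 : opTrace (ε * F * w) = 0 := self_eq_neg.mp h0
  unfold Trs
  rw [hg, mul_smul_comm, opTrace_smul, h1]
  ring

lemma claim3 (h : Setup n ε F x) (hn : Even n) {q : ℕ} (hq : q ≤ n) :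
    Trs ε F (x 0 * opList (D F x) 1 q * x (q + 1) * x (q + 2) *
      opList (D F x) (q + 3) (n - q)) =
      -(Complex.I / 2) * (T ε F (x (q + 1) * x (q + 2) *
        (opList (D F x) (q + 3) (n - q) * opList (D F x) 0 (q + 1))) +
        (-1) ^ q * (T ε F (V n F x (q + 1)) + T ε F (V n F x q))) := by
  set Y := opList (D F x) 1 q with hY
  set Z := opList (D F x) (q + 3) (n - q) with hZ
  have hz : ε * (x (q + 1) * x (q + 2)) = x (q + 1) * x (q + 2) * ε := by
    rw [← mul_assoc, h.ev, mul_assoc, h.ev, mul_assoc]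
  have hstep := V_step (F := F) (x := x) hq
  rw [← hY, ← hZ] at hstep
  have hd : opList (D F x) 0 (q + 1) = dOp F (x 0) * Y := by rw [opList_succ]; rfl
  have hz' := h.wtd (q + 1) (q + 2)
  rw [mul_assoc _ (x (q + 1))]
  set z := x (q + 1) * x (q + 2) with hzd
  set s : ℂ := (-1) ^ q with hs
  have hss : s * s = 1 := sgn_sq q
  have hs2 : (-1 : ℂ) ^ (n - q) = s := by
    have : s * (-1 : ℂ) ^ (n - q) = 1 := by
      rw [hs, ← pow_add, show q + (n - q) = n by omega, hn.neg_one_pow]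
    calc (-1 : ℂ) ^ (n - q) = (s * s) * (-1 : ℂ) ^ (n - q) := by rw [hss, one_mul]
      _ = s * (s * (-1 : ℂ) ^ (n - q)) := by ring
      _ = s := by rw [this, mul_one]
  have FY : F * Y = s • (Y * F) := h.F_L _ _
  have eY : ε * Y = s • (Y * ε) := h.e_L _ _
  have FZ : F * Z = s • (Z * F) := by rw [hZ, h.F_L, hs2]
  have eZ : ε * Z = s • (Z * ε) := by rw [hZ, h.e_L, hs2]
  have hθ : ε * (x 0 * Y * z * Z) = x 0 * Y * z * Z * ε := by
    calc ε * (x 0 * Y * z * Z) = (ε * x 0) * Y * z * Z := by noncomm_ring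
      _ = x 0 * (ε * Y) * z * Z := by rw [h.ev]; noncomm_ring
      _ = s • (x 0 * Y * (ε * z) * Z) := by
          rw [eY, mul_smul_comm, smul_mul_assoc, smul_mul_assoc]; congr 1
      _ = s • (x 0 * Y * z * (ε * Z)) := by rw [hz]; congr 1
      _ = (s * s) • (x 0 * Y * z * Z * ε) := by
          rw [eZ, mul_smul_comm, smul_smul]; congr 1
      _ = _ := by rw [hss, one_smul]
  have hg : gComm ε F (x 0 * Y * z * Z) = (-Complex.I) • (dOp F (x 0) * Y * (z * Z) +
      s • (x 0 * Y * dOp F z * Z)) := by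
    have : F * (x 0 * Y * z * Z) = x 0 * Y * z * Z * F +
        (-Complex.I) • (dOp F (x 0) * Y * (z * Z) + s • (x 0 * Y * dOp F z * Z)) := by
      calc F * (x 0 * Y * z * Z) = (F * x 0) * Y * z * Z := by noncomm_ring
        _ = x 0 * (F * Y) * z * Z - Complex.I • (dOp F (x 0) * Y * (z * Z)) := by
            rw [F_mul_eq F (x 0), sub_mul, sub_mul, sub_mul, smul_mul_assoc, smul_mul_assoc,
              smul_mul_assoc]
            simp only [mul_assoc]
        _ = s • (x 0 * Y * (F * z) * Z) - Complex.I • (dOp F (x 0) * Y * (z * Z)) := by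
            rw [FY, mul_smul_comm, smul_mul_assoc, smul_mul_assoc]; simp only [mul_assoc]
        _ = s • (x 0 * Y * z * (F * Z)) - (s * Complex.I) • (x 0 * Y * dOp F z * Z)
              - Complex.I • (dOp F (x 0) * Y * (z * Z)) := by
            rw [F_mul_eq F z, mul_sub, sub_mul, smul_sub, mul_smul_comm, smul_mul_assoc,
              smul_smul]
            simp only [mul_assoc]
        _ = _ := by
            rw [FZ, mul_smul_comm, smul_smul, hss, one_smul, smul_add, smul_smul, neg_mul,
              neg_smul, neg_smul, mul_comm s]
            simp only [mul_assoc]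
            abel
    rw [gComm_even h.e2 hθ, this]
    abel
  have w1 : Wt (n + 1) (n + 1) (dOp F (x 0) * Y * (z * Z)) := by
    have := (h.wtL 0 (q + 1)).mul (wt_mul_left (h.wtL (q + 3) (n - q)) z)
    rwa [hd, show q + 1 + (n - q) = n + 1 by omega] at this
  have w2 : Wt (n + 1) (n + 1) (s • (x 0 * Y * dOp F z * Z)) := by
    rw [hstep]
    exact ((h.wtV (by omega)).add (h.wtV (by omega))).smul (Nat.succ_pos n) _
  have hT : Trs ε F (x 0 * Y * z * Z) = 2⁻¹ * T ε F (gComm ε F (x 0 * Y * z * Z)) := rfl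
  rw [hT, hg, T_smul, T_add w1 w2, T_smul, hstep, T_add (h.wtV (by omega)) (h.wtV (by omega)),
    ← hd, h.T_cyc (wt_mul_left (h.wtL (q + 3) (n - q)) z) (by omega)]
  rw [← hZ, mul_assoc z]
  ring

end Setup


/-! ### Combinatorics of the coboundary -/

namespace Setup

lemma sum_lemma (n : ℕ) (hn : Even n) (P Q : ℕ → ℕ → ℂ)
    (h1 : ∀ i j, i < n + 2 → j ≤ i → P i j = Q j (i - j))
    (h2 : ∀ i j, i < j → j < n + 2 → P i j = Q (j + 1) (i + n + 2 - j))
    (h3 : ∀ j, 1 ≤ j → j < n + 2 → P (n + 2) j = Q j (n + 2 - j))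
    (h4 : P (n + 2) 0 = Q (n + 2) 0) :
    ∑ i ∈ Finset.range (n + 3), (-1 : ℂ) ^ i * ∑ j ∈ Finset.range (n + 2), (-1 : ℂ) ^ j * P i j =
    ∑ p ∈ Finset.range (n + 3), ∑ q ∈ Finset.range (n + 2), (-1 : ℂ) ^ q * Q p q := by
  have hpar : ∀ a b : ℕ, Even (a + b) → (-1 : ℂ) ^ a = (-1) ^ b := by
    intro a b hab
    rw [Nat.even_add] at hab
    rcases Nat.even_or_odd b with hb | hb
    · rw [(hab.mpr hb).neg_one_pow, hb.neg_one_pow]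
    · have ha : Odd a := by
        rw [← Nat.not_even_iff_odd] at hb ⊢
        exact fun h => hb (hab.mp h)
      rw [ha.neg_one_pow, hb.neg_one_pow]
  simp only [Finset.mul_sum]
  rw [← Finset.sum_product', ← Finset.sum_product']
  refine Finset.sum_nbij'
    (fun x => if x.2 ≤ x.1 then (if x.1 = n + 2 ∧ x.2 = 0 then (n + 2, 0) else (x.2, x.1 - x.2))
      else (x.2 + 1, x.1 + n + 2 - x.2))
    (fun x => if x.1 = n + 2 ∧ x.2 = 0 then (n + 2, 0) else
      if x.1 + x.2 ≤ n + 2 then (x.1 + x.2, x.1) else (x.1 + x.2 - (n + 3), x.1 - 1))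
    ?_ ?_ ?_ ?_ ?_
  · rintro ⟨i, j⟩ h
    simp only [Finset.mem_product, Finset.mem_range] at h ⊢
    split_ifs <;> simp <;> omega
  · rintro ⟨i, j⟩ h
    simp only [Finset.mem_product, Finset.mem_range] at h ⊢
    split_ifs <;> simp <;> omega
  · rintro ⟨i, j⟩ h
    simp only [Finset.mem_product, Finset.mem_range] at h ⊢
    by_cases c1 : j ≤ i
    · by_cases c2 : i = n + 2 ∧ j = 0
      · simp [c2]
      · simp only [c1, c2, if_true, if_false]
        rw [if_neg (by omega), if_pos (by omega)]
        ext <;> simp; omega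
    · simp only [c1, if_false]
      rw [if_neg (by omega), if_neg (by omega)]
      ext <;> simp; omega
  · rintro ⟨i, j⟩ h
    simp only [Finset.mem_product, Finset.mem_range] at h ⊢
    by_cases c1 : i = n + 2 ∧ j = 0
    · simp [c1]
    · by_cases c2 : i + j ≤ n + 2
      · simp only [c1, c2, if_true, if_false]
        rw [if_pos (by omega), if_neg (by omega)]
        ext <;> simp
      · simp only [c1, c2, if_false]
        rw [if_neg (by omega)]
        ext <;> simp <;> omega
  · rintro ⟨i, j⟩ h
    simp only [Finset.mem_product, Finset.mem_range] at h ⊢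
    obtain ⟨r, hr⟩ := hn
    by_cases c1 : j ≤ i
    · by_cases c2 : i = n + 2 ∧ j = 0
      · obtain ⟨rfl, rfl⟩ := c2
        simp only [if_true, Nat.zero_le, and_self, h4]
        rw [hpar (n + 2) 0 ⟨r + 1, by omega⟩]
        simp
      · simp only [c1, c2, if_true, if_false]
        have hP : P i j = Q j (i - j) := by
          by_cases c3 : i = n + 2
          · subst c3; exact h3 j (by omega) (by omega)
          · exact h1 i j (by omega) c1
        rw [hP, ← mul_assoc, ← pow_add, hpar (i + j) (i - j) ⟨i, by omega⟩]
    · simp only [c1, if_false]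
      rw [h2 i j (by omega) (by omega), ← mul_assoc, ← pow_add,
        hpar (i + j) (i + n + 2 - j) ⟨i + r + 1, by omega⟩]

section faces
variable {B : Type*} [Mul B] {n : ℕ} {α β : ℕ → B}

lemma face1 (hα : ∀ y, α (y + (n + 3)) = α y) (hβ : ∀ y, β (y + (n + 2)) = β y) {i j k : ℕ}
    (hm : ∀ l, l < n + 2 → β l = merge i α l) (hi : i < n + 2) (hj : j ≤ i) (hk : k < n + 2) :
    β (j + k) = merge (i - j) (fun k => α (j + k)) k := by
  by_cases c : j + k < n + 2
  · rw [hm _ c]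
    unfold merge
    by_cases c1 : j + k < i
    · rw [if_pos c1, if_pos (by omega)]
    · by_cases c2 : j + k = i
      · rw [if_neg c1, if_pos c2, if_neg (by omega), if_pos (by omega), add_assoc]
      · rw [if_neg c1, if_neg c2, if_neg (by omega), if_neg (by omega), add_assoc]
  · obtain ⟨l, hl⟩ : ∃ l, j + k = l + (n + 2) := ⟨j + k - (n + 2), by omega⟩
    rw [hl, hβ, hm _ (by omega)]
    unfold merge
    rw [if_pos (by omega), if_neg (by omega), if_neg (by omega)]
    change α l = α (j + (k + 1))
    rw [show j + (k + 1) = l + (n + 3) by omega, hα]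

lemma face2 (hα : ∀ y, α (y + (n + 3)) = α y) (hβ : ∀ y, β (y + (n + 2)) = β y) {i j k : ℕ}
    (hm : ∀ l, l < n + 2 → β l = merge i α l) (hij : i < j) (hj : j < n + 2) (hk : k < n + 2) :
    β (j + k) = merge (i + n + 2 - j) (fun k => α (j + 1 + k)) k := by
  by_cases c : j + k < n + 2
  · rw [hm _ c]
    unfold merge
    rw [if_neg (by omega), if_neg (by omega), if_pos (by omega)]
    congr 1; omega
  · obtain ⟨l, hl⟩ : ∃ l, j + k = l + (n + 2) := ⟨j + k - (n + 2), by omega⟩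
    rw [hl, hβ, hm _ (by omega)]
    unfold merge
    simp only [show j + 1 + k = l + (n + 3) by omega,
      show j + 1 + (k + 1) = (l + 1) + (n + 3) by omega, hα]
    by_cases c1 : l < i
    · rw [if_pos c1, if_pos (by omega)]
    · by_cases c2 : l = i
      · rw [if_neg c1, if_pos c2, if_neg (by omega), if_pos (by omega)]
      · rw [if_neg c1, if_neg c2, if_neg (by omega), if_neg (by omega)]

lemma face3 (hα : ∀ y, α (y + (n + 3)) = α y) (hβ : ∀ y, β (y + (n + 2)) = β y) {j k : ℕ}
    (hm : ∀ l, l < n + 2 → β l = if l = 0 then α (n + 2) * α 0 else α l)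
    (hj1 : 1 ≤ j) (hj : j < n + 2) (hk : k < n + 2) :
    β (j + k) = merge (n + 2 - j) (fun k => α (j + k)) k := by
  by_cases c : j + k < n + 2
  · rw [hm _ c]
    unfold merge
    rw [if_neg (by omega), if_pos (by omega)]
  · obtain ⟨l, hl⟩ : ∃ l, j + k = l + (n + 2) := ⟨j + k - (n + 2), by omega⟩
    rw [hl, hβ, hm _ (by omega)]
    unfold merge
    simp only [hl, show j + (k + 1) = l + (n + 3) by omega, hα]
    by_cases c2 : l = 0
    · rw [if_pos c2, if_neg (by omega), if_pos (by omega), c2, zero_add]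
    · rw [if_neg c2, if_neg (by omega), if_neg (by omega)]

lemma face4 (hα : ∀ y, α (y + (n + 3)) = α y) {k : ℕ}
    (hm : ∀ l, l < n + 2 → β l = if l = 0 then α (n + 2) * α 0 else α l) (hk : k < n + 2) :
    β (0 + k) = merge 0 (fun k => α (n + 2 + k)) k := by
  rw [zero_add, hm _ hk]
  unfold merge
  simp only [show n + 2 + (k + 1) = k + (n + 3) by omega, hα]
  by_cases c2 : k = 0
  · subst c2; simp
  · rw [if_neg c2, if_neg (by omega), if_neg c2]

end faces

lemma natIdx_add {B : Type*} {m : ℕ} (a : Fin (m + 1) → B) (k : ℕ) :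
    natIdx a (k + (m + 1)) = natIdx a k := by
  unfold natIdx
  congr 2
  exact Nat.add_mod_right k (m + 1)

lemma natIdx_lt {B : Type*} {m : ℕ} (a : Fin (m + 1) → B) {k : ℕ} (hk : k < m + 1) :
    natIdx a k = a ⟨k, hk⟩ := by
  unfold natIdx
  congr 2
  exact Nat.mod_eq_of_lt hk

lemma Phi0_congr {n : ℕ} {ε F : H →L[ℂ] H} {y y' : ℕ → H →L[ℂ] H}
    (h : ∀ k, k < n + 2 → y k = y' k) : Phi0 n ε F y = Phi0 n ε F y' := by
  unfold Phi0
  rw [h 0 (by omega), opList_congr (f := D F y) (g := D F y') (s := 1) (t := 1)]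
  intro i hi
  simp only [D]
  rw [h _ (by omega)]

lemma phiFn_eq (ρf : A → H →L[ℂ] H) (ε F : H →L[ℂ] H) (n : ℕ) (a : Fin (n + 2) → A) :
    phiFn ρf ε F n a = ∑ j ∈ Finset.range (n + 2), (-1 : ℂ) ^ j *
      Phi0 n ε F (fun k => ρf (natIdx (m := n + 1) a (j + k))) := by
  unfold phiFn Phi0 T
  refine Finset.sum_congr rfl fun j _ => ?_
  congr 2
  rw [← mul_assoc]
  congr 1
  exact opList_congr fun i _ => by simp [D, add_assoc]

lemma merge_map (ρ : A →ₙₐ[ℂ] (H →L[ℂ] H)) (q : ℕ) (c : ℕ → A) (k : ℕ) :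
    ρ (merge q c k) = merge q (fun k => ρ (c k)) k := by
  unfold merge
  split_ifs <;> simp

lemma hoch_eq {n : ℕ} (hn : Even n) (ε F : H →L[ℂ] H) (ρ : A →ₙₐ[ℂ] (H →L[ℂ] H))
    (c : ℂ) (a : Fin (n + 3) → A) :
    hochB (n + 1) (fun x => c * phiFn (⇑ρ) ε F n x) a =
      c * ∑ p ∈ Finset.range (n + 3), ∑ q ∈ Finset.range (n + 2), (-1 : ℂ) ^ q *
        Phi0 n ε F (merge q (fun k => ρ (natIdx (m := n + 2) a (p + k)))) := by
  set fc : ℕ → Fin (n + 2) → A := fun i => if i = n + 2 then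
      (fun j : Fin (n + 2) => if (j : ℕ) = 0 then a (Fin.last (n + 2)) * a 0 else a j.castSucc)
    else (fun j : Fin (n + 2) => if (j : ℕ) < i then a j.castSucc
        else if (j : ℕ) = i then a j.castSucc * a j.succ else a j.succ) with hfc
  have hα : ∀ y, natIdx (m := n + 2) a (y + (n + 3)) = natIdx (m := n + 2) a y :=
    fun y => natIdx_add a y
  have hβ : ∀ i y, natIdx (m := n + 1) (fc i) (y + (n + 2)) = natIdx (m := n + 1) (fc i) y :=
    fun i y => natIdx_add (fc i) y
  have hm1 : ∀ i, i < n + 2 → ∀ l, l < n + 2 → natIdx (m := n + 1) (fc i) l =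
      merge i (natIdx (m := n + 2) a) l := by
    intro i hi l hl
    rw [natIdx_lt _ hl]
    unfold merge
    rw [natIdx_lt a (show l < n + 2 + 1 by omega), natIdx_lt a (show l + 1 < n + 2 + 1 by omega)]
    simp only [hfc]
    rw [if_neg (by omega)]
    rfl
  have hm2 : ∀ l, l < n + 2 → natIdx (m := n + 1) (fc (n + 2)) l =
      if l = 0 then natIdx (m := n + 2) a (n + 2) * natIdx (m := n + 2) a 0
        else natIdx (m := n + 2) a l := by
    intro l hl
    rw [natIdx_lt _ hl, natIdx_lt a (show l < n + 2 + 1 by omega),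
      natIdx_lt a (show n + 2 < n + 2 + 1 by omega), natIdx_lt a (show 0 < n + 2 + 1 by omega)]
    simp only [hfc]
    rw [if_pos trivial]
    rfl
  have hL : hochB (n + 1) (fun x => c * phiFn (⇑ρ) ε F n x) a =
      c * ∑ i ∈ Finset.range (n + 3), (-1 : ℂ) ^ i * phiFn (⇑ρ) ε F n (fc i) := by
    rw [Finset.sum_range_succ, Finset.sum_range]
    unfold hochB
    rw [mul_add, Finset.mul_sum]
    congr 1
    · refine Finset.sum_congr rfl fun i _ => ?_
      have : fc (i : ℕ) = (fun j : Fin (n + 2) => if (j : ℕ) < (i : ℕ) then a j.castSucc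
        else if (j : ℕ) = (i : ℕ) then a j.castSucc * a j.succ else a j.succ) := by
        simp only [hfc]
        rw [if_neg (by have := i.isLt; omega)]
      rw [this]
      ring
    · have : fc (n + 2) = (fun j : Fin (n + 2) => if (j : ℕ) = 0 then a (Fin.last (n + 2)) * a 0
          else a j.castSucc) := by
        simp only [hfc]
        rw [if_pos trivial]
      rw [this]
      ring
  rw [hL]
  congr 1
  simp only [phiFn_eq]
  refine sum_lemma n hn
    (fun i j => Phi0 n ε F (fun k => ρ (natIdx (m := n + 1) (fc i) (j + k))))
    (fun p q => Phi0 n ε F (merge q (fun k => ρ (natIdx (m := n + 2) a (p + k))))) ?_ ?_ ?_ ?_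
  · intro i j hi hj
    refine Phi0_congr fun k hk => ?_
    rw [face1 hα (hβ i) (hm1 i hi) hi hj hk, merge_map]
  · intro i j hi hj
    refine Phi0_congr fun k hk => ?_
    rw [face2 hα (hβ i) (hm1 i (by omega)) hi hj hk, merge_map]
  · intro j hi hj
    refine Phi0_congr fun k hk => ?_
    rw [face3 hα (hβ _) hm2 hi hj hk, merge_map]
  · refine Phi0_congr fun k hk => ?_
    rw [face4 hα hm2 hk, merge_map]

lemma sum_periodic (G : ℕ → ℂ) (N c : ℕ) (hG : ∀ p, G (p + N) = G p) :
    ∑ p ∈ Finset.range N, G (p + c) = ∑ p ∈ Finset.range N, G p := by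
  induction c with
  | zero => simp
  | succ c ih =>
    rw [← ih]
    have h1 := Finset.sum_range_succ (fun p => G (p + c)) N
    have h2 := Finset.sum_range_succ' (fun p => G (p + c)) N
    have h3 : G (N + c) = G (0 + c) := by rw [zero_add, add_comm, hG]
    rw [h1] at h2
    simp only [h3] at h2
    have h4 := add_right_cancel h2
    rw [h4]
    refine Finset.sum_congr rfl fun p _ => ?_
    congr 1; ring

lemma phi_cyclic {n : ℕ} (hn : Even n) (ε F : H →L[ℂ] H) (ρf : A → H →L[ℂ] H)
    (a : Fin (n + 2) → A) :
    phiFn ρf ε F n (fun i => a (i + 1)) = (-1 : ℂ) ^ (n + 1) * phiFn ρf ε F n a := by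
  have hsh : ∀ k, natIdx (m := n + 1) (fun i => a (i + 1)) k = natIdx (m := n + 1) a (k + 1) := by
    intro k
    unfold natIdx
    simp only
    congr 1
    ext
    rw [Fin.val_add]
    simp
  rw [phiFn_eq, phiFn_eq]
  simp only [hsh]
  set f : ℕ → ℂ := fun j => Phi0 n ε F (fun k => ρf (natIdx (m := n + 1) a (j + k))) with hf
  have e1 : ∀ j, Phi0 n ε F (fun k => ρf (natIdx (m := n + 1) a (j + k + 1))) = f (j + 1) := by
    intro j
    simp only [hf]
    congr 1
    funext k
    congr 2
    ring
  simp only [e1]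
  have s : (-1 : ℂ) ^ (n + 1) = -1 := by rw [pow_add, hn.neg_one_pow]; norm_num
  have hper : f (n + 2) = f 0 := by
    simp only [hf]
    congr 1
    funext k
    congr 1
    rw [add_comm (n + 2) k, zero_add]
    exact natIdx_add a k
  change _ = (-1 : ℂ) ^ (n + 1) * ∑ j ∈ Finset.range (n + 2), (-1 : ℂ) ^ j * f j
  have h1 := Finset.sum_range_succ (fun j => (-1 : ℂ) ^ j * f (j + 1)) (n + 1)
  have h2 := Finset.sum_range_succ' (fun j => (-1 : ℂ) ^ j * f j) (n + 1)
  rw [h1, h2, hper, s, mul_add, Finset.mul_sum, pow_zero, one_mul]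
  congr 1
  refine Finset.sum_congr rfl fun j _ => ?_
  rw [pow_succ]; ring

lemma trs_sum {n : ℕ} {ε F : H →L[ℂ] H} {x : ℕ → H →L[ℂ] H} (h : Setup n ε F x) (hn : Even n)
    (hper : ∀ k, x (k + (n + 3)) = x k) :
    (∑ j ∈ Finset.range (n + 2), Trs ε F
        (opList (fun k => if k = 0 then x k else dOp F (x k)) 0 j * x j * x (j + 1) *
          opList (fun k => dOp F (x k)) (j + 2) (n + 1 - j))) -
      ((n : ℂ) / 2 + 1) * Trs ε F (x 0 * opList (fun k => dOp F (x k)) 1 (n + 2)) =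
    Complex.I / 2 * ∑ p ∈ Finset.range (n + 3), ∑ q ∈ Finset.range (n + 2), (-1 : ℂ) ^ q *
        Phi0 n ε F (merge q (fun k => x (p + k))) := by
  change (∑ j ∈ Finset.range (n + 2), Trs ε F
        (opList (fun k => if k = 0 then x k else D F x k) 0 j * x j * x (j + 1) *
          opList (D F x) (j + 2) (n + 1 - j))) -
      ((n : ℂ) / 2 + 1) * Trs ε F (x 0 * opList (D F x) 1 (n + 2)) = _
  have hDper : ∀ k, D F x (k + (n + 3)) = D F x k := fun k => by simp only [D]; rw [hper]
  set G : ℕ → ℂ := fun p => T ε F (x p * x (p + 1) * opList (D F x) (p + 2) (n + 1)) with hG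
  set K : ℕ → ℂ := fun p => T ε F (opList (D F x) p (n + 3)) with hK
  have hGper : ∀ p, G (p + (n + 3)) = G p := by
    intro p
    simp only [hG]
    rw [hper, show p + (n + 3) + 1 = (p + 1) + (n + 3) by ring, hper]
    congr 2
    refine opList_congr fun i _ => ?_
    rw [show p + (n + 3) + 2 + i = (p + 2 + i) + (n + 3) by ring, hDper]
  have hKsucc : ∀ p, K (p + 1) = K p := by
    intro p
    simp only [hK]
    rw [opList_succ' (D F x) (p + 1) (n + 2), show p + 1 + (n + 2) = p + (n + 3) by ring, hDper,
      opList_succ (D F x) p (n + 2)]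
    have := h.T_cyc (s := p) (k := 1) (h.wtL (p + 1) (n + 2)) (by omega)
    rw [opList_succ, opList_zero, mul_one] at this
    exact this.symm
  have hK0 : ∀ p, K p = K 0 := by
    intro p
    induction p with
    | zero => rfl
    | succ p ih => rw [hKsucc, ih]
  have hV : ∀ p, T ε F (V n F (fun k => x (p + k)) (n + 1)) = G (p + (n + 2)) - 2⁻¹ * K 0 := by
    intro p
    rw [(h.shift p).claim2 hn]
    rw [← hK0 (p + (n + 2))]
    simp only [hG, hK, D_shift]
    have e1 : x (p + (n + 2) + 1) = x (p + 0) := by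
      rw [show p + (n + 2) + 1 = p + (n + 3) by ring, hper, add_zero]
    have e2 : opList (D F x) (p + (n + 2) + 2) (n + 1) = opList (D F x) (p + 1) (n + 1) :=
      opList_congr fun i _ => by
        rw [show p + (n + 2) + 2 + i = (p + 1 + i) + (n + 3) by ring, hDper]
    have e3 : opList (D F x) (p + (n + 2) + 1) (n + 2) = opList (D F x) (p + 0) (n + 2) :=
      opList_congr fun i _ => by
        rw [show p + (n + 2) + 1 + i = (p + 0 + i) + (n + 3) by ring, hDper]
    rw [e1, e2, opList_succ (D F x) (p + (n + 2)) (n + 2), e3]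
    rfl
  have hR : ∑ p ∈ Finset.range (n + 3), ∑ q ∈ Finset.range (n + 2), (-1 : ℂ) ^ q *
        Phi0 n ε F (merge q (fun k => x (p + k))) =
      -(∑ p ∈ Finset.range (n + 3), G p) + ((n : ℂ) + 3) * 2⁻¹ * K 0 := by
    have : ∀ p ∈ Finset.range (n + 3), ∑ q ∈ Finset.range (n + 2), (-1 : ℂ) ^ q *
        Phi0 n ε F (merge q (fun k => x (p + k))) = - G (p + (n + 2)) + 2⁻¹ * K 0 := by
      intro p _
      rw [(h.shift p).bprime hn, hV]
      ring
    rw [Finset.sum_congr rfl this, Finset.sum_add_distrib, Finset.sum_neg_distrib,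
      sum_periodic G (n + 3) (n + 2) hGper]
    simp
    ring
  have hzero : Trs ε F (opList (fun k => if k = 0 then x k else D F x k) 0 0 * x 0 * x (0 + 1) *
          opList (D F x) (0 + 2) (n + 1 - 0)) = 0 := by
    rw [opList_zero, one_mul]
    exact h.claim4 hn
  have hj : ∀ q ∈ Finset.range (n + 1), Trs ε F
        (opList (fun k => if k = 0 then x k else D F x k) 0 (q + 1) * x (q + 1) * x (q + 1 + 1) *
          opList (D F x) (q + 1 + 2) (n + 1 - (q + 1))) =
      -(Complex.I / 2) * (G (q + 1) +
        (-1) ^ q * (T ε F (V n F x (q + 1)) + T ε F (V n F x q))) := by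
    intro q hq
    have hq' : q ≤ n := by have := Finset.mem_range.mp hq; omega
    have e1 : opList (fun k => if k = 0 then x k else D F x k) 0 (q + 1) =
        x 0 * opList (D F x) 1 q := by
      rw [opList_succ, if_pos rfl]
      congr 1
      exact opList_congr fun i _ => by rw [zero_add, if_neg (by omega)]
    have e2 : opList (D F x) (q + 3) (n - q) * opList (D F x) 0 (q + 1) =
        opList (D F x) (q + 1 + 2) (n + 1) := by
      rw [show n + 1 = (n - q) + (q + 1) by omega, opList_add (D F x) (q + 1 + 2) (n - q) (q + 1)]
      refine congrArg₂ (· * ·) rfl ?_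
      refine opList_congr fun i _ => ?_
      rw [show q + 1 + 2 + (n - q) + i = (0 + i) + (n + 3) by omega, hDper]
    have := h.claim3 hn hq'
    rw [e2] at this
    rw [e1, show n + 1 - (q + 1) = n - q by omega]
    exact this
  have hV0 : T ε F (V n F x 0) = G 0 := by
    simp [V, hG, opList_zero]
  have hVn : T ε F (V n F x (n + 1)) = G (n + 2) - 2⁻¹ * K 0 := by
    have := hV 0
    simpa only [zero_add] using this
  rw [Finset.sum_range_succ', hzero, Finset.sum_congr rfl hj, ← Finset.mul_sum,
    Finset.sum_add_distrib, tele (fun q => T ε F (V n F x q)), h.claim5 hn, hR, hV0, hVn]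
  have hGs : ∑ p ∈ Finset.range (n + 3), G p =
      ∑ q ∈ Finset.range (n + 1), G (q + 1) + G 0 + G (n + 2) := by
    rw [Finset.sum_range_succ, Finset.sum_range_succ']
  have hKK : T ε F (opList (D F x) 0 (n + 3)) = K 0 := rfl
  rw [hGs, hKK]
  have s : (-1 : ℂ) ^ (n + 1) = -1 := by rw [pow_add, hn.neg_one_pow]; norm_num
  rw [s]
  ring

end Setup


/-- Connes periodicity: with `n = 2m` positive even, `(H, ε)` ℤ₂-graded, `F² = 1`,
`Fε = -εF`, `ρ : A → B(H)` a homomorphism into even operators with `Fρ(a) - ρ(a)F`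
`(n+1)`-Schatten, the cochain `φ` is cyclic (`φ ∈ C^{n+1}_λ(A)`) and
`Sτⁿ - τ^{n+2} = b(2^m i^{m+2} π^{m+1} m!· φ)`; in particular `Sτⁿ` and `τ^{n+2}`
define the same class in `H^{n+2}_λ(A)`. -/
theorem periodicity_of_chern (m n : ℕ) (hm : 0 < m) (hn : n = 2 * m)
    (ε F : H →L[ℂ] H) (hε : IsSelfAdjoint ε) (hε2 : ε * ε = 1) (hF2 : F * F = 1)
    (hFε : F * ε = -(ε * F))
    (ρ : A →ₙₐ[ℂ] (H →L[ℂ] H)) (heven : ∀ a : A, ε * ρ a = ρ a * ε)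
    (hS : ∀ a : A, MemSchatten ((n : ℝ) + 1) (F * ρ a - ρ a * F)) :
    (∀ a : Fin (n + 2) → A,
      phiFn (⇑ρ) ε F n (fun i => a (i + 1)) = (-1 : ℂ) ^ (n + 1) * phiFn (⇑ρ) ε F n a) ∧
    (∀ a : Fin (n + 3) → A,
      STau (⇑ρ) ε F m n a - tauChar (⇑ρ) ε F (m + 1) (n + 2) a =
        hochB (n + 1)
          (fun x => (2 : ℂ) ^ m * Complex.I ^ (m + 2) * (Real.pi : ℂ) ^ (m + 1) *
            (Nat.factorial m : ℂ) * phiFn (⇑ρ) ε F n x) a) := by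
  have hne : Even n := ⟨m, by omega⟩
  refine ⟨fun a => Setup.phi_cyclic hne ε F ρ a, fun a => ?_⟩
  have hset : Setup n ε F (fun k => ρ (natIdx (m := n + 2) a k)) :=
    ⟨hε2, hF2, hFε, fun _ => heven _, fun _ => Wt.of_schatten (hS _)⟩
  have hmain := hset.trs_sum hne fun k => congrArg ρ (Setup.natIdx_add a k)
  rw [Setup.hoch_eq hne]
  have hch : charOp (⇑ρ) F (n + 2) a = ρ (natIdx (m := n + 2) a 0) *
      opList (fun k => dOp F (ρ (natIdx (m := n + 2) a k))) 1 (n + 2) := rfl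
  unfold STau tauChar
  rw [hch]
  have hnm : (n : ℂ) / 2 = m := by rw [hn]; push_cast; ring
  rw [hnm] at hmain
  have hfac : ((m + 1).factorial : ℂ) = ((m : ℂ) + 1) * (m.factorial : ℂ) := by
    rw [Nat.factorial_succ]; push_cast; ring
  rw [hfac]
  have hc : (2 : ℂ) ^ m * Complex.I ^ (m + 2) * (Real.pi : ℂ) ^ (m + 1) * (m.factorial : ℂ) =
      (2 * Complex.I * (Real.pi : ℂ)) ^ (m + 1) * (m.factorial : ℂ) * (Complex.I / 2) := by
    rw [mul_pow, mul_pow]; ring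
  rw [hc, mul_assoc _ (Complex.I / 2), ← hmain]
  ring
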